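/- arXiv:1603.04785 — 7 statements merged into one kernel-verified Lean document; each statement's English description precedes it below -/
import Mathlib

section
/- Given a control policy v, the LET function τ is Lipschitz continuous on [t₀, T] with Lipschitz constant v_max/v_min; that is, |τ(t₂) − τ(t₁)| ≤ (v_max/v_min)·|t₂ − t₁| for all t₁, t₂ ∈ [t₀, T]. -/
open MeasureTheory Filter Topology

/-!
Additivity of the integral, together with `∫ s in τ t₁..t₁, v s = L = ∫ s in τ t₂..t₂, v s`, gives
`∫ s in τ t₁..τ t₂, v s = ∫ s in t₁..t₂, v s`: the speed integrated over the shift of the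
entering time equals the speed integrated over the shift of the exit time.
Take `t₁ ≤ t₂`. Since `v ≥ vmin > 0`, the right side is nonnegative, which forces `τ t₁ ≤ τ t₂`;
the left side is then at least `vmin * (τ t₂ - τ t₁)` and the right side at most
`vmax * (t₂ - t₁)`.
-/

lemma intervalIntegrable_of_mem_Icc {T vmin vmax : ℝ} {v : ℝ → ℝ} (hmeas : Measurable v)
    (hbd : ∀ s ∈ Set.Icc (0 : ℝ) T, v s ∈ Set.Icc vmin vmax) {a b : ℝ}
    (ha : a ∈ Set.Icc 0 T) (hb : b ∈ Set.Icc 0 T) : IntervalIntegrable v volume a b := by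
  rw [intervalIntegrable_iff]
  refine Measure.integrableOn_of_bounded (M := max |vmin| |vmax|) (by simp)
    hmeas.aestronglyMeasurable ?_
  refine ae_restrict_of_forall_mem measurableSet_uIoc fun s hs => ?_
  have hs' := hbd s (Set.uIcc_subset_Icc ha hb (Set.uIoc_subset_uIcc hs))
  exact abs_le_max_abs_abs hs'.1 hs'.2

lemma integral_bounds {T vmin vmax : ℝ} {v : ℝ → ℝ} (hmeas : Measurable v)
    (hbd : ∀ s ∈ Set.Icc (0 : ℝ) T, v s ∈ Set.Icc vmin vmax) {a b : ℝ}
    (ha : 0 ≤ a) (hab : a ≤ b) (hb : b ≤ T) :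
    vmin * (b - a) ≤ ∫ s in a..b, v s ∧ (∫ s in a..b, v s) ≤ vmax * (b - a) := by
  have hi := intervalIntegrable_of_mem_Icc hmeas hbd (a := a) (b := b)
    ⟨ha, hab.trans hb⟩ ⟨ha.trans hab, hb⟩
  have hv : ∀ s ∈ Set.Icc a b, v s ∈ Set.Icc vmin vmax := fun s hs =>
    hbd s ⟨ha.trans hs.1, hs.2.trans hb⟩
  constructor
  · have h := intervalIntegral.integral_mono_on hab intervalIntegrable_const hi
      fun s hs => (hv s hs).1
    rw [intervalIntegral.integral_const, smul_eq_mul] at h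
    linarith
  · have h := intervalIntegral.integral_mono_on hab hi intervalIntegrable_const
      fun s hs => (hv s hs).2
    rw [intervalIntegral.integral_const, smul_eq_mul] at h
    linarith

/-- Given a control policy `v`, the LET function `τ` is Lipschitz continuous on
`[t₀, T]` with Lipschitz constant `v_max / v_min`: for all `t₁, t₂ ∈ [t₀, T]`,
`|τ(t₂) − τ(t₁)| ≤ (v_max / v_min) · |t₂ − t₁|`. -/
theorem stmt_2 (L T vmin vmax t₀ : ℝ) (hL : 0 < L) (hT : 0 < T)
    (hvmin : 0 < vmin) (hvv : vmin ≤ vmax)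
    (v : ℝ → ℝ) (hmeas : Measurable v)
    (hbd : ∀ s ∈ Set.Icc (0 : ℝ) T, v s ∈ Set.Icc vmin vmax)
    (ht₀0 : 0 ≤ t₀) (ht₀T : t₀ ≤ T) (ht₀L : (∫ s in (0 : ℝ)..t₀, v s) = L)
    (τ : ℝ → ℝ)
    (hτ : ∀ t ∈ Set.Icc t₀ T, τ t ∈ Set.Icc 0 t ∧ (∫ s in τ t..t, v s) = L) :
    ∀ t₁ ∈ Set.Icc t₀ T, ∀ t₂ ∈ Set.Icc t₀ T,
      |τ t₂ - τ t₁| ≤ (vmax / vmin) * |t₂ - t₁| := by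
  intro t₁ h₁ t₂ h₂
  wlog h12 : t₁ ≤ t₂ generalizing t₁ t₂
  · rw [abs_sub_comm, abs_sub_comm t₂]
    exact this t₂ h₂ t₁ h₁ (le_of_not_ge h12)
  obtain ⟨hm₁, hL₁⟩ := hτ t₁ h₁
  obtain ⟨hm₂, hL₂⟩ := hτ t₂ h₂
  have mt₁ : t₁ ∈ Set.Icc 0 T := ⟨ht₀0.trans h₁.1, h₁.2⟩
  have mt₂ : t₂ ∈ Set.Icc 0 T := ⟨ht₀0.trans h₂.1, h₂.2⟩
  have mτ₁ : τ t₁ ∈ Set.Icc 0 T := ⟨hm₁.1, hm₁.2.trans h₁.2⟩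
  have mτ₂ : τ t₂ ∈ Set.Icc 0 T := ⟨hm₂.1, hm₂.2.trans h₂.2⟩
  have key : (∫ s in τ t₁..τ t₂, v s) = ∫ s in t₁..t₂, v s := by
    have e₁ := intervalIntegral.integral_add_adjacent_intervals
      (intervalIntegrable_of_mem_Icc hmeas hbd mτ₁ mt₁)
      (intervalIntegrable_of_mem_Icc hmeas hbd mt₁ mt₂)
    have e₂ := intervalIntegral.integral_add_adjacent_intervals
      (intervalIntegrable_of_mem_Icc hmeas hbd mτ₁ mτ₂)
      (intervalIntegrable_of_mem_Icc hmeas hbd mτ₂ mt₂)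
    linarith
  obtain ⟨hlo, hhi⟩ := integral_bounds hmeas hbd mt₁.1 h12 mt₂.2
  have hmono : τ t₁ ≤ τ t₂ := by
    by_contra! hlt
    have h := (integral_bounds hmeas hbd mτ₂.1 hlt.le mτ₁.2).1
    rw [intervalIntegral.integral_symm, key] at h
    have h3 : 0 < vmin * (τ t₁ - τ t₂) := mul_pos hvmin (sub_pos.2 hlt)
    have h4 : 0 ≤ vmin * (t₂ - t₁) := mul_nonneg hvmin.le (sub_nonneg.2 h12)
    linarith
  have h := (integral_bounds hmeas hbd mτ₁.1 hmono mτ₂.2).1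
  rw [abs_of_nonneg (sub_nonneg.2 hmono), abs_of_nonneg (sub_nonneg.2 h12), div_mul_eq_mul_div,
    le_div_iff₀ hvmin]
  linarith
end

section
/- Given a control policy v, the LET function τ is strictly increasing on [t₀, T]; more precisely, for all t₀ ≤ t₁ ≤ t₂ ≤ T one has τ(t₂) − τ(t₁) ≥ (v_min/v_max)·(t₂ − t₁). -/
/-! Subtracting `∫ v = L` over `[τ t₁, t₁]` from the same identity over `[τ t₂, t₂]` gives
`∫_{τ t₁}^{τ t₂} v = ∫_{t₁}^{t₂} v`. The right side is at least `vmin * (t₂ - t₁) ≥ 0`, which, as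
`v` is positive, forces `τ t₁ ≤ τ t₂`; the left side is then at most `vmax * (τ t₂ - τ t₁)`.
Strict monotonicity follows because `vmin / vmax > 0`. -/

open MeasureTheory Filter Topology

/-- The interval integral of `v` over `[a, b] ⊆ [0, T]` lies between the bounds coming from
`vmin ≤ v ≤ vmax`, and `v` is integrable there. -/
lemma integral_policy_bounds {T vmin vmax : ℝ} {v : ℝ → ℝ} (hmeas : Measurable v)
    (hbd : ∀ s ∈ Set.Icc (0 : ℝ) T, v s ∈ Set.Icc vmin vmax)
    {a b : ℝ} (ha : 0 ≤ a) (hab : a ≤ b) (hb : b ≤ T) :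
    IntervalIntegrable v volume a b ∧
      vmin * (b - a) ≤ ∫ s in a..b, v s ∧ ∫ s in a..b, v s ≤ vmax * (b - a) := by
  have hmem : ∀ s ∈ Set.Icc a b, v s ∈ Set.Icc vmin vmax := fun s hs =>
    hbd s ⟨ha.trans hs.1, hs.2.trans hb⟩
  have hint : IntervalIntegrable v volume a b := by
    rw [intervalIntegrable_iff_integrableOn_Icc_of_le hab]
    refine Measure.integrableOn_of_bounded (M := max |vmin| |vmax|)
      measure_Icc_lt_top.ne hmeas.aestronglyMeasurable ?_
    filter_upwards [ae_restrict_mem measurableSet_Icc] with s hs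
    exact abs_le_max_abs_abs (hmem s hs).1 (hmem s hs).2
  refine ⟨hint, ?_, ?_⟩
  · have h := intervalIntegral.integral_mono_on hab
      (intervalIntegrable_const (c := vmin)) hint fun s hs => (hmem s hs).1
    rw [intervalIntegral.integral_const, smul_eq_mul] at h
    linarith
  · have h := intervalIntegral.integral_mono_on hab hint
      (intervalIntegrable_const (c := vmax)) fun s hs => (hmem s hs).2
    rw [intervalIntegral.integral_const, smul_eq_mul] at h
    linarith

/-- Given a control policy `v`, the LET function `τ` is strictly increasing on
`[t₀, T]`; more precisely, for all `t₀ ≤ t₁ ≤ t₂ ≤ T` one has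
`τ(t₂) − τ(t₁) ≥ (v_min / v_max) · (t₂ − t₁)`. -/
theorem stmt_3 (L T vmin vmax t₀ : ℝ) (hL : 0 < L) (hT : 0 < T)
    (hvmin : 0 < vmin) (hvv : vmin ≤ vmax)
    (v : ℝ → ℝ) (hmeas : Measurable v)
    (hbd : ∀ s ∈ Set.Icc (0 : ℝ) T, v s ∈ Set.Icc vmin vmax)
    (ht₀0 : 0 ≤ t₀) (ht₀T : t₀ ≤ T) (ht₀L : (∫ s in (0 : ℝ)..t₀, v s) = L)
    (τ : ℝ → ℝ)
    (hτ : ∀ t ∈ Set.Icc t₀ T, τ t ∈ Set.Icc 0 t ∧ (∫ s in τ t..t, v s) = L) :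
    StrictMonoOn τ (Set.Icc t₀ T) ∧
    ∀ t₁ t₂ : ℝ, t₀ ≤ t₁ → t₁ ≤ t₂ → t₂ ≤ T →
      (vmin / vmax) * (t₂ - t₁) ≤ τ t₂ - τ t₁ := by
  have hvmax : 0 < vmax := hvmin.trans_le hvv
  have key : ∀ t₁ t₂ : ℝ, t₀ ≤ t₁ → t₁ ≤ t₂ → t₂ ≤ T →
      (vmin / vmax) * (t₂ - t₁) ≤ τ t₂ - τ t₁ := by
    intro t₁ t₂ h01 h12 h2T
    obtain ⟨⟨h1a, h1b⟩, h1L⟩ := hτ t₁ ⟨h01, h12.trans h2T⟩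
    obtain ⟨⟨h2a, h2b⟩, h2L⟩ := hτ t₂ ⟨h01.trans h12, h2T⟩
    have hint : ∀ x, 0 ≤ x → x ≤ T → IntervalIntegrable v volume 0 x := fun x hx hxT =>
      (integral_policy_bounds hmeas hbd le_rfl hx hxT).1
    have i1 := hint (τ t₁) h1a (by linarith)
    have i2 := hint (τ t₂) h2a (by linarith)
    have j1 := hint t₁ (by linarith) (by linarith)
    have j2 := hint t₂ (by linarith) h2T
    have heq : ∫ s in τ t₁..τ t₂, v s = ∫ s in t₁..t₂, v s := by
      rw [← intervalIntegral.integral_interval_sub_left j1 i1] at h1L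
      rw [← intervalIntegral.integral_interval_sub_left j2 i2] at h2L
      rw [← intervalIntegral.integral_interval_sub_left i2 i1,
        ← intervalIntegral.integral_interval_sub_left j2 j1]
      linarith
    have hlow := (integral_policy_bounds hmeas hbd (ht₀0.trans h01) h12 h2T).2.1
    have hle : τ t₁ ≤ τ t₂ := by
      by_contra! hlt
      have hrev := (integral_policy_bounds hmeas hbd h2a hlt.le (by linarith)).2.1
      rw [intervalIntegral.integral_symm, heq] at hrev
      have hpos := mul_pos hvmin (sub_pos.2 hlt)
      have hnonneg := mul_nonneg hvmin.le (sub_nonneg.2 h12)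
      linarith
    have hup := (integral_policy_bounds hmeas hbd h1a hle (by linarith)).2.2
    rw [div_mul_eq_mul_div, div_le_iff₀ hvmax]
    linarith
  refine ⟨fun t₁ h1 t₂ h2 hlt => ?_, key⟩
  have hpos := mul_pos (div_pos hvmin hvmax) (sub_pos.2 hlt)
  linarith [key t₁ t₂ h1.1 hlt.le h2.2]
end

section
/- If the control policy v belongs to BV([0,T], [v_min, v_max]) and the inflow In belongs to BV([0,T], [f_min, f_max]) with 0 < f_min ≤ f_max, then the outflow Out(t) = In(τ(t))·v(t)/v(τ(t)) is a function of bounded variation on [t₀, T]. -/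
/-!
A monotone change of variables does not increase variation, so everything rests on the link
entering time `τ` being monotone on `[t₀, T]` (`monotoneOn_entryTime`): if `s ≤ t` but `τ t < τ s`,
the window `[τ t, t]` contains `[τ s, s]` together with an interval of positive length, on which the
positive function `v` has positive integral, so the two windows cannot both carry the integral `L`.
Hence `In ∘ τ` and `v ∘ τ` have bounded variation. As `v ∘ τ` is bounded below by `vmin > 0` and
`x ↦ x⁻¹` is Lipschitz on `[vmin, ∞)`, its reciprocal also has bounded variation, and the outflow is
a product of three functions of bounded variation.
-/

open MeasureTheory Filter Topology

/-- By Jordan decomposition, a function of bounded variation is a difference of two monotone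
functions, hence integrable. -/
lemma BoundedVariationOn.intervalIntegrable_of_Icc {f : ℝ → ℝ} {a b : ℝ} (hab : a ≤ b)
    (hf : BoundedVariationOn f (Set.Icc a b)) : IntervalIntegrable f volume a b := by
  obtain ⟨p, q, hp, hq, rfl⟩ := hf.locallyBoundedVariationOn.exists_monotoneOn_sub_monotoneOn
  rw [← Set.uIcc_of_le hab] at hp hq
  exact hp.intervalIntegrable.sub hq.intervalIntegrable

lemma lipschitzOnWith_inv_Ici {m : ℝ} (hm : 0 < m) :
    LipschitzOnWith (Real.toNNReal (m ^ 2)⁻¹) (fun x : ℝ => x⁻¹) (Set.Ici m) := by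
  refine LipschitzOnWith.of_dist_le_mul fun x (hx : m ≤ x) y (hy : m ≤ y) => ?_
  have hx0 : 0 < x := hm.trans_le hx
  have hy0 : 0 < y := hm.trans_le hy
  rw [Real.coe_toNNReal _ (by positivity), dist_inv_inv₀ hx0.ne' hy0.ne', Real.norm_of_nonneg hx0.le,
    Real.norm_of_nonneg hy0.le, div_eq_inv_mul]
  gcongr
  nlinarith

lemma monotoneOn_entryTime {L T t₀ : ℝ} {v τ : ℝ → ℝ}
    (hpos : ∀ s ∈ Set.Icc (0 : ℝ) T, 0 < v s) (hint : IntervalIntegrable v volume 0 T)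
    (hτ : ∀ t ∈ Set.Icc t₀ T, τ t ∈ Set.Icc 0 t ∧ (∫ s in τ t..t, v s) = L) :
    MonotoneOn τ (Set.Icc t₀ T) := by
  intro s hs t ht hst
  by_contra! hlt
  obtain ⟨⟨hs0, hss⟩, hsL⟩ := hτ s hs
  obtain ⟨⟨ht0, htt⟩, htL⟩ := hτ t ht
  have htT : t ≤ T := ht.2
  have hsub : ∀ {a b : ℝ}, 0 ≤ a → a ≤ b → b ≤ T → IntervalIntegrable v volume a b := by
    intro a b ha hab hb
    refine hint.mono_set ?_
    rw [Set.uIcc_of_le hab, Set.uIcc_of_le (ha.trans (hab.trans hb))]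
    exact Set.Icc_subset_Icc ha hb
  have i₁ := hsub ht0 hlt.le (hss.trans hs.2)
  have i₂ := hsub hs0 hss hs.2
  have i₃ := hsub (hs0.trans hss) hst htT
  have h₁ : 0 < ∫ r in τ t..τ s, v r :=
    intervalIntegral.intervalIntegral_pos_of_pos_on i₁
      (fun x hx => hpos x ⟨by linarith [hx.1], by linarith [hx.2]⟩) hlt
  have h₃ : 0 ≤ ∫ r in s..t, v r :=
    intervalIntegral.integral_nonneg hst
      (fun x hx => (hpos x ⟨by linarith [hx.1], by linarith [hx.2]⟩).le)
  have e₁ := intervalIntegral.integral_add_adjacent_intervals i₁ i₂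
  have e₂ := intervalIntegral.integral_add_adjacent_intervals (i₁.trans i₂) i₃
  linarith

/-- If the control policy `v ∈ BV([0,T], [v_min, v_max])` and the inflow
`In ∈ BV([0,T], [f_min, f_max])` with `0 < f_min ≤ f_max`, then the outflow
`Out(t) = In(τ(t))·v(t)/v(τ(t))` is a function of bounded variation on `[t₀, T]`. -/
theorem stmt_6 (L T vmin vmax fmin fmax t₀ : ℝ) (hL : 0 < L) (hT : 0 < T)
    (hvmin : 0 < vmin) (hvv : vmin ≤ vmax)
    (hfmin : 0 < fmin) (hff : fmin ≤ fmax)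
    (v In : ℝ → ℝ)
    (hbd : ∀ s ∈ Set.Icc (0 : ℝ) T, v s ∈ Set.Icc vmin vmax)
    (hIn : ∀ s ∈ Set.Icc (0 : ℝ) T, In s ∈ Set.Icc fmin fmax)
    (hvBV : BoundedVariationOn v (Set.Icc 0 T))
    (hInBV : BoundedVariationOn In (Set.Icc 0 T))
    (ht₀0 : 0 ≤ t₀) (ht₀T : t₀ ≤ T) (ht₀L : (∫ s in (0 : ℝ)..t₀, v s) = L)
    (τ : ℝ → ℝ)
    (hτ : ∀ t ∈ Set.Icc t₀ T, τ t ∈ Set.Icc 0 t ∧ (∫ s in τ t..t, v s) = L) :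
    BoundedVariationOn (fun t => In (τ t) * v t / v (τ t)) (Set.Icc t₀ T) := by
  have hmono : MonotoneOn τ (Set.Icc t₀ T) :=
    monotoneOn_entryTime (fun s hs => hvmin.trans_le (hbd s hs).1)
      (hvBV.intervalIntegrable_of_Icc hT.le) hτ
  have hmaps : Set.MapsTo τ (Set.Icc t₀ T) (Set.Icc 0 T) := fun t ht =>
    ⟨(hτ t ht).1.1, (hτ t ht).1.2.trans ht.2⟩
  have hcomp : ∀ {f : ℝ → ℝ}, BoundedVariationOn f (Set.Icc 0 T) →
      BoundedVariationOn (f ∘ τ) (Set.Icc t₀ T) := fun {f} hf =>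
    ne_top_of_le_ne_top hf (eVariationOn.comp_le_of_monotoneOn f τ hmono hmaps)
  have hinv : BoundedVariationOn ((fun x : ℝ => x⁻¹) ∘ (v ∘ τ)) (Set.Icc t₀ T) :=
    (lipschitzOnWith_inv_Ici hvmin).comp_boundedVariationOn
      (fun t ht => (hbd _ (hmaps ht)).1) (hcomp hvBV)
  have hv' : BoundedVariationOn v (Set.Icc t₀ T) :=
    hvBV.mono (Set.Icc_subset_Icc_left ht₀0)
  exact ((hcomp hInBV).mul hv').mul hinv
end

section
/- Fix K > 0 and C ≥ v_min > 0, and let Ω = { v ∈ BV([0,T], [v_min, C]) : TV(v) ≤ K }. Let In ∈ BV([0,T], [f_min, f_max]) and f* ∈ BV([0,T], [f_min, f_max]) with 0 < f_min ≤ f_max, and let ρ₀ ∈ BV([0,L], [ρ_min, ρ_cr]) with 0 < ρ_min ≤ ρ_cr. For v ∈ Ω define Out_v(t) := ρ₀(L − ∫₀^t v(s) ds)·v(t) if ∫₀^t v(s) ds < L, and Out_v(t) := In(τ_v(t))·v(t)/v(τ_v(t)) otherwise, where τ_v is the LET function of v; set J(v) := ∫₀^T (Out_v(t) − f*(t))²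 dt. Then J is Lipschitz continuous on Ω with respect to the L¹([0,T]) norm: there exists C' > 0 such that |J(v) − J(v')| ≤ C'·‖v − v'‖_{L¹} for all v, v' ∈ Ω. -/
/-!
All data are extended from their interval to the whole line by constants, the same constant `vmin`
for both policies `v`, `v'`. The extensions `w`, `w'` satisfy `∫_ℝ |w - w'| = D := ‖v - v'‖_{L¹}`,
the travelled distances `V = ∫_0^t w` and `V'` satisfy `|V - V'| ≤ D` everywhere, and the entering
times `τ`, `τ'`, defined on all of `ℝ` by `V (τ t) = V t - L`, satisfy `|τ - τ'| ≤ 2D / vmin`.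

Two facts carry the proof. First, `V` expands distances by at least `vmin` and `τ` by at least
`vmin / C`, so composing a nonnegative function with one of them increases its integral at most by
a constant factor (`integral_comp_le`). Second, a function `g` of bounded variation has increments
dominated by those of a bounded monotone `G` (`exists_dominates`), so `|x - y| ≤ δ` implies
`|g x - g y| ≤ G (x + δ) - G (x - δ)`, whose integral in `x` telescopes to `O(δ)`
(`integral_increment_le`). Hence `∫ |g (φ t) - g (ψ t)| dt = O(δ)` for `φ` expanding and
`|φ - ψ| ≤ δ`; this handles `ρ₀`, the inflow and the policy `w` itself, which is where the bound `K` on the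
total variation enters.

The outflow difference is bounded pointwise by such terms, plus a constant on the set
`|V - L| ≤ D`, of measure `O(D)`, where the two policies may be in different regimes (`abs_flow_sub_le`).
Integrating gives an `L¹` bound on the outflows (`exists_flow_majorant`), and boundedness of the
outflows passes it on to the quadratic cost.
-/

open MeasureTheory Filter Topology

/-- The link entering time (LET) of the policy `w` on a road of length `Lr`: the unique
`u ∈ [0,t]` with `∫_u^t w = Lr` (realized as an infimum, which coincides with it whenever
`w` is integrable, bounded below away from `0` and `∫_0^t w ≥ Lr`). -/
noncomputable def letTime (Lr : ℝ) (w : ℝ → ℝ) (t : ℝ) : ℝ :=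
  sInf {u : ℝ | 0 ≤ u ∧ (∫ s in u..t, w s) ≤ Lr}

/-- The outflow of the policy `w`: transported initial datum `ρ₀` before the first
characteristic from the inflow boundary arrives, and `In(τ_w(t))·w(t)/w(τ_w(t))` afterwards. -/
noncomputable def outflow (Lr : ℝ) (ρ₀ In : ℝ → ℝ) (w : ℝ → ℝ) (t : ℝ) : ℝ :=
  if (∫ s in (0 : ℝ)..t, w s) < Lr then ρ₀ (Lr - ∫ s in (0 : ℝ)..t, w s) * w t
  else In (letTime Lr w t) * w t / w (letTime Lr w t)

/-- The quadratic tracking cost `J(w) = ∫₀^T (Out_w(t) − f*(t))² dt`. -/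
noncomputable def trackCost (Lr T : ℝ) (ρ₀ In fstar : ℝ → ℝ) (w : ℝ → ℝ) : ℝ :=
  ∫ t in (0 : ℝ)..T, (outflow Lr ρ₀ In w t - fstar t) ^ 2

/-! ### Constant extension and domination by monotone functions -/

/-- The function equal to `g` on `[a,b]` and to the constant `k` elsewhere. -/
noncomputable def extendBy (a b k : ℝ) (g : ℝ → ℝ) (x : ℝ) : ℝ :=
  open Classical in if x ∈ Set.Icc a b then g x else k

theorem extendBy_of_mem {a b k : ℝ} {g : ℝ → ℝ} {x : ℝ} (hx : x ∈ Set.Icc a b) :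
    extendBy a b k g x = g x := if_pos hx

theorem extendBy_mem {a b k lo hi : ℝ} {g : ℝ → ℝ} (hk : k ∈ Set.Icc lo hi)
    (hg : ∀ x ∈ Set.Icc a b, g x ∈ Set.Icc lo hi) (x : ℝ) :
    extendBy a b k g x ∈ Set.Icc lo hi := by
  unfold extendBy
  split_ifs with h
  · exact hg x h
  · exact hk

/-- `G` takes values in `[0,R]` and each of its increments bounds the corresponding increment of `g`
in absolute value. For such a `G` to exist says that `g` has variation at most `R` on the line. -/
structure Dominates (R : ℝ) (G g : ℝ → ℝ) : Prop where
  abs_sub_le : ∀ x y, x ≤ y → |g y - g x| ≤ G y - G x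
  nonneg : ∀ x, 0 ≤ G x
  le : ∀ x, G x ≤ R

theorem Dominates.monotone {R : ℝ} {G g : ℝ → ℝ} (h : Dominates R G g) : Monotone G :=
  fun x y hxy => by linarith [h.abs_sub_le x y hxy, abs_nonneg (g y - g x)]

/-- Both `G` and `G - g` are monotone. -/
theorem Dominates.measurable {R : ℝ} {G g : ℝ → ℝ} (h : Dominates R G g) : Measurable g := by
  have h2 : Monotone (fun x => G x - g x) := fun x y hxy => by
    have := (abs_le.1 (h.abs_sub_le x y hxy)).2
    simp only; linarith
  have h3 : g = fun x => G x - (G x - g x) := by ext x; ring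
  rw [h3]
  exact h.monotone.measurable.sub h2.measurable

/-- The dominating function is the variation of `g` on `[a,b] ∩ (-∞,x]`, plus a jump of size `R` at
each endpoint to absorb the discontinuities created by the constant extension. -/
theorem exists_dominates {a b k K R : ℝ} {g : ℝ → ℝ} (hK : 0 ≤ K) (hR : 0 ≤ R)
    (hg : ∀ x ∈ Set.Icc a b, |g x - k| ≤ R)
    (hV : eVariationOn g (Set.Icc a b) ≤ ENNReal.ofReal K) :
    ∃ G, Dominates (K + 2 * R) G (extendBy a b k g) := by
  have hle : ∀ x, eVariationOn g (Set.Icc a b ∩ Set.Iic x) ≤ ENNReal.ofReal K := fun x =>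
    (eVariationOn.mono g Set.inter_subset_left).trans hV
  have hfin : ∀ x, eVariationOn g (Set.Icc a b ∩ Set.Iic x) ≠ ⊤ := fun x =>
    ((hle x).trans_lt ENNReal.ofReal_lt_top).ne
  set W : ℝ → ℝ := fun x => (eVariationOn g (Set.Icc a b ∩ Set.Iic x)).toReal with hW
  have hWmono : Monotone W := fun x y hxy =>
    ENNReal.toReal_mono (hfin y)
      (eVariationOn.mono g (Set.inter_subset_inter_right _ (Set.Iic_subset_Iic.2 hxy)))
  have hWg : ∀ x y, x ≤ y → x ∈ Set.Icc a b → y ∈ Set.Icc a b → |g y - g x| ≤ W y - W x := by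
    intro x y hxy hx hy
    have h1 := eVariationOn.add_le_union g (s := Set.Icc a b ∩ Set.Iic x) (t := Set.Icc x y)
      (fun p hp q hq => hp.2.trans hq.1)
    have h2 : eVariationOn g (Set.Icc a b ∩ Set.Iic x ∪ Set.Icc x y) ≤
        eVariationOn g (Set.Icc a b ∩ Set.Iic y) := by
      apply eVariationOn.mono
      rintro z (⟨hz1, hz2⟩ | hz)
      · exact ⟨hz1, le_trans hz2 hxy⟩
      · exact ⟨⟨hx.1.trans hz.1, hz.2.trans hy.2⟩, hz.2⟩
    have h3 : edist (g y) (g x) ≤ eVariationOn g (Set.Icc x y) :=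
      eVariationOn.edist_le g ⟨hxy, le_rfl⟩ ⟨le_rfl, hxy⟩
    have h4 : eVariationOn g (Set.Icc a b ∩ Set.Iic x) + edist (g y) (g x) ≤
        eVariationOn g (Set.Icc a b ∩ Set.Iic y) :=
      (add_le_add le_rfl h3).trans (h1.trans h2)
    have h5 := ENNReal.toReal_mono (hfin y) h4
    rw [ENNReal.toReal_add (hfin x) (edist_ne_top _ _), ← dist_edist, Real.dist_eq] at h5
    simp only [hW]; linarith
  refine ⟨fun x => W x + (if a ≤ x then R else 0) + (if b < x then R else 0), ?_, ?_, ?_⟩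
  · intro x y hxy
    have hm := hWmono hxy
    simp only [extendBy]
    by_cases hx : x ∈ Set.Icc a b <;> by_cases hy : y ∈ Set.Icc a b
    · have := hWg x y hxy hx hy
      simp only [if_pos hx, if_pos hy, if_pos hx.1, if_pos hy.1, if_neg (not_lt.2 hx.2),
        if_neg (not_lt.2 hy.2)]
      linarith
    · have hby : b < y := by
        by_contra h
        exact hy ⟨hx.1.trans hxy, not_lt.1 h⟩
      have := hg x hx
      rw [abs_sub_comm] at this
      simp only [if_pos hx, if_neg hy, if_pos hx.1, if_pos (hx.1.trans hxy),
        if_neg (not_lt.2 hx.2), if_pos hby]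
      linarith
    · have hxa : ¬ a ≤ x := fun h => hx ⟨h, hxy.trans hy.2⟩
      have := hg y hy
      simp only [if_neg hx, if_pos hy, if_neg hxa, if_pos hy.1, if_neg (not_lt.2 hy.2),
        if_neg (not_lt.2 (hxy.trans hy.2))]
      linarith
    · simp only [if_neg hx, if_neg hy, sub_self, abs_zero]
      split_ifs <;> linarith
  · intro x
    have : 0 ≤ W x := ENNReal.toReal_nonneg
    split_ifs <;> linarith
  · intro x
    have : W x ≤ K := ENNReal.toReal_le_of_le_ofReal hK (hle x)
    split_ifs <;> linarith

/-! ### Integral estimates along expanding maps -/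

/-- Change of variables as an inequality: a map expanding distances by at least `c` pushes Lebesgue
measure forward to at most `c⁻¹` times Lebesgue measure, because preimages under it have
one-dimensional Hausdorff measure at most `c⁻¹` times that of the set. -/
theorem integral_comp_le {φ h : ℝ → ℝ} {c : ℝ} (hc : 0 < c) (hφm : Measurable φ)
    (hφ : ∀ x y, c * |x - y| ≤ |φ x - φ y|) (hh : Measurable h) (h0 : ∀ x, 0 ≤ h x)
    (hi : Integrable h) :
    Integrable (fun t => h (φ t)) ∧ ∫ t, h (φ t) ≤ c⁻¹ * ∫ t, h t := by
  have hA : AntilipschitzWith (Real.toNNReal c⁻¹) φ := by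
    apply AntilipschitzWith.of_le_mul_dist
    intro x y
    rw [Real.dist_eq, Real.dist_eq, Real.coe_toNNReal _ (inv_nonneg.2 hc.le),
      inv_mul_eq_div, le_div_iff₀ hc, mul_comm]
    exact hφ x y
  have hmap : Measure.map φ volume ≤ (ENNReal.ofReal c⁻¹) • (volume : Measure ℝ) := by
    refine Measure.le_iff.2 fun s hs => ?_
    rw [Measure.map_apply hφm hs]
    have := hA.hausdorffMeasure_preimage_le (d := 1) zero_le_one s
    rw [hausdorffMeasure_real, ENNReal.rpow_one] at this
    simpa [ENNReal.ofReal] using this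
  have hi' : Integrable h ((ENNReal.ofReal c⁻¹) • (volume : Measure ℝ)) :=
    hi.smul_measure ENNReal.ofReal_ne_top
  have hi2 := hi'.mono_measure hmap
  refine ⟨(integrable_map_measure hh.aestronglyMeasurable hφm.aemeasurable).1 hi2, ?_⟩
  rw [← integral_map hφm.aemeasurable hh.aestronglyMeasurable]
  refine (integral_mono_measure hmap (Eventually.of_forall h0) hi').trans ?_
  rw [integral_smul_measure, ENNReal.toReal_ofReal (inv_nonneg.2 hc.le), smul_eq_mul]

/-- Over `[-N,N]` the integral telescopes to an integral of `G` over an interval of length `2δ`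
around `N`, minus one around `-N`. -/
theorem integral_increment_le {G : ℝ → ℝ} {R δ : ℝ} (hG : Monotone G) (h0 : ∀ x, 0 ≤ G x)
    (hR : ∀ x, G x ≤ R) (hδ : 0 ≤ δ) :
    Integrable (fun x => G (x + δ) - G (x - δ)) ∧
      ∫ x, (G (x + δ) - G (x - δ)) ≤ 2 * δ * R := by
  have hii : ∀ a b, IntervalIntegrable G volume a b := fun a b => hG.intervalIntegrable
  have hnn : ∀ x, 0 ≤ G (x + δ) - G (x - δ) := fun x => sub_nonneg.2 (hG (by linarith))
  have hm : Measurable (fun x => G (x + δ) - G (x - δ)) :=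
    (hG.measurable.comp (measurable_id.add_const δ)).sub
      (hG.measurable.comp (measurable_id.sub_const δ))
  have hp : Monotone fun x => G (x + δ) := fun x y h => hG (by linarith)
  have hq : Monotone fun x => G (x - δ) := fun x y h => hG (by linarith)
  have key : ∀ N : ℝ, ∫ x in (-N)..N, (G (x + δ) - G (x - δ)) ≤ 2 * δ * R := by
    intro N
    rw [intervalIntegral.integral_sub hp.intervalIntegrable hq.intervalIntegrable,
      intervalIntegral.integral_comp_add_right, intervalIntegral.integral_comp_sub_right,
      intervalIntegral.integral_interval_sub_interval_comm' (hii _ _) (hii _ _) (hii _ _)]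
    have h1 : ∫ x in (N - δ)..(N + δ), G x ≤ 2 * δ * R := by
      have := intervalIntegral.integral_mono_on (a := N - δ) (b := N + δ) (by linarith) (hii _ _)
        (intervalIntegrable_const (c := R)) (fun x _ => hR x)
      rw [intervalIntegral.integral_const, smul_eq_mul] at this
      linarith
    have h2 : 0 ≤ ∫ x in (-N - δ)..(-N + δ), G x :=
      intervalIntegral.integral_nonneg (by linarith) fun x _ => h0 x
    linarith
  have hint : Integrable (fun x => G (x + δ) - G (x - δ)) := by
    refine integrable_of_intervalIntegral_norm_bounded (l := (atTop : Filter ℝ))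
      (a := fun N => -N) (b := fun N => N) (2 * δ * R) (fun N => ?_)
      tendsto_neg_atTop_atBot tendsto_id ?_
    · have := (hp.intervalIntegrable (μ := volume) (a := -N) (b := N)).sub
        (hq.intervalIntegrable (a := -N) (b := N))
      exact this.1
    · refine Eventually.of_forall fun N => ?_
      simp only [Real.norm_of_nonneg (hnn _)]
      exact key N
  refine ⟨hint, ?_⟩
  exact le_of_tendsto (intervalIntegral_tendsto_integral hint tendsto_neg_atTop_atBot tendsto_id)
    (Eventually.of_forall key)

theorem Dominates.abs_sub_le_increment {R : ℝ} {G g : ℝ → ℝ} (h : Dominates R G g) {x y δ : ℝ}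
    (hxy : |x - y| ≤ δ) : |g x - g y| ≤ G (x + δ) - G (x - δ) := by
  have hδ := (abs_nonneg _).trans hxy
  obtain ⟨h1, h2⟩ := abs_le.1 hxy
  rcases le_total x y with hle | hle
  · rw [abs_sub_comm]
    have := h.abs_sub_le x y hle
    have a1 := h.monotone (show y ≤ x + δ by linarith)
    have a2 := h.monotone (show x - δ ≤ x by linarith)
    linarith
  · have := h.abs_sub_le y x hle
    have a1 := h.monotone (show x ≤ x + δ by linarith)
    have a2 := h.monotone (show x - δ ≤ y by linarith)
    linarith

/-! ### Travelled distance and entering time -/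

/-- Distance `∫_0^t w` travelled up to time `t` under the policy `w`. -/
noncomputable def travel (w : ℝ → ℝ) (t : ℝ) : ℝ := ∫ s in (0 : ℝ)..t, w s

section
variable {w w' : ℝ → ℝ} {c C L : ℝ}

theorem intervalIntegrable_of_mem (hm : Measurable w) (hw : ∀ x, w x ∈ Set.Icc c C) (a b : ℝ) :
    IntervalIntegrable w volume a b := by
  refine (intervalIntegrable_const (c := max |c| |C|)).mono_fun hm.aestronglyMeasurable ?_
  refine Eventually.of_forall fun x => ?_
  simp only [Real.norm_eq_abs]
  exact (abs_le_max_abs_abs (hw x).1 (hw x).2).trans (le_abs_self _)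

theorem travel_sub (hm : Measurable w) (hw : ∀ x, w x ∈ Set.Icc c C) (x y : ℝ) :
    travel w y - travel w x = ∫ s in x..y, w s :=
  intervalIntegral.integral_interval_sub_left (intervalIntegrable_of_mem hm hw _ _)
    (intervalIntegrable_of_mem hm hw _ _)

theorem travel_bounds (hm : Measurable w) (hw : ∀ x, w x ∈ Set.Icc c C) {x y : ℝ} (hxy : x ≤ y) :
    c * (y - x) ≤ travel w y - travel w x ∧ travel w y - travel w x ≤ C * (y - x) := by
  rw [travel_sub hm hw]
  have h1 := intervalIntegral.integral_mono_on hxy intervalIntegrable_const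
    (intervalIntegrable_of_mem hm hw x y) (fun s _ => (hw s).1)
  have h2 := intervalIntegral.integral_mono_on hxy
    (intervalIntegrable_of_mem hm hw x y) intervalIntegrable_const (fun s _ => (hw s).2)
  rw [intervalIntegral.integral_const, smul_eq_mul] at h1 h2
  constructor <;> linarith

theorem travel_strictMono (hc : 0 < c) (hm : Measurable w) (hw : ∀ x, w x ∈ Set.Icc c C) :
    StrictMono (travel w) := fun x y hxy => by
  have := (travel_bounds hm hw hxy.le).1
  nlinarith [mul_pos hc (sub_pos.2 hxy)]

theorem travel_antilipschitz (hm : Measurable w) (hw : ∀ x, w x ∈ Set.Icc c C) (x y : ℝ) :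
    c * |x - y| ≤ |travel w x - travel w y| := by
  rcases le_total x y with h | h
  · rw [abs_sub_comm, abs_of_nonneg (sub_nonneg.2 h), abs_sub_comm]
    exact (travel_bounds hm hw h).1.trans (le_abs_self _)
  · rw [abs_of_nonneg (sub_nonneg.2 h)]
    exact (travel_bounds hm hw h).1.trans (le_abs_self _)

/-- Since `w ≥ c > 0` on the whole line, the entering time exists for every `t`, with
negative values allowed. -/
theorem exists_delay (hc : 0 < c) (hL : 0 < L) (hm : Measurable w)
    (hw : ∀ x, w x ∈ Set.Icc c C) :
    ∃ τ : ℝ → ℝ, ∀ t, travel w (τ t) = travel w t - L := by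
  have hcont : Continuous (travel w) :=
    intervalIntegral.continuous_primitive (fun a b => intervalIntegrable_of_mem hm hw a b) 0
  have : ∀ t, ∃ u, travel w u = travel w t - L := by
    intro t
    have hle : t - L / c ≤ t := by have := div_pos hL hc; linarith
    have h1 := (travel_bounds hm hw hle).1
    have h2 : c * (t - (t - L / c)) = L := by field_simp; ring
    obtain ⟨u, -, hu⟩ := intermediate_value_Icc hle hcont.continuousOn
      (show travel w t - L ∈ Set.Icc _ _ from ⟨by linarith, by linarith⟩)
    exact ⟨u, hu⟩
  choose τ hτ using this
  exact ⟨τ, hτ⟩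

theorem delay_strictMono {τ : ℝ → ℝ} (hc : 0 < c) (hm : Measurable w)
    (hw : ∀ x, w x ∈ Set.Icc c C) (hτ : ∀ t, travel w (τ t) = travel w t - L) :
    StrictMono τ := fun x y hxy => by
  have hs := travel_strictMono hc hm hw
  rw [← hs.lt_iff_lt, hτ, hτ]
  linarith [hs hxy]

theorem delay_antilipschitz {τ : ℝ → ℝ} (hc : 0 < c) (hm : Measurable w)
    (hw : ∀ x, w x ∈ Set.Icc c C) (hτ : ∀ t, travel w (τ t) = travel w t - L) (x y : ℝ) :
    c / C * |x - y| ≤ |τ x - τ y| := by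
  have hC : 0 < C := hc.trans_le ((hw 0).1.trans (hw 0).2)
  wlog hxy : y ≤ x generalizing x y
  · rw [abs_sub_comm, abs_sub_comm (τ x)]
    exact this y x (le_of_not_ge hxy)
  have h1 := (travel_bounds hm hw hxy).1
  have hmo := (delay_strictMono hc hm hw hτ).monotone hxy
  have h2 := (travel_bounds hm hw hmo).2
  rw [hτ, hτ] at h2
  rw [abs_of_nonneg (sub_nonneg.2 hxy), abs_of_nonneg (sub_nonneg.2 hmo), div_mul_eq_mul_div,
    div_le_iff₀ hC]
  linarith

theorem abs_travel_sub_le (hm : Measurable w) (hw : ∀ x, w x ∈ Set.Icc c C)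
    (hm' : Measurable w') (hw' : ∀ x, w' x ∈ Set.Icc c C)
    (hi : Integrable fun x => |w x - w' x|) (t : ℝ) :
    |travel w t - travel w' t| ≤ ∫ x, |w x - w' x| := by
  unfold travel
  rw [← intervalIntegral.integral_sub (intervalIntegrable_of_mem hm hw _ _)
    (intervalIntegrable_of_mem hm' hw' _ _), ← Real.norm_eq_abs,
    intervalIntegral.norm_intervalIntegral_eq]
  refine (norm_integral_le_integral_norm _).trans ?_
  exact setIntegral_le_integral hi (Eventually.of_forall fun x => abs_nonneg _)

/-- Compares `travel w` at `τ t` and `τ' t`, using that `travel w` expands distances by at least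
`c`. -/
theorem abs_delay_sub_le {τ τ' : ℝ → ℝ} {D : ℝ} (hc : 0 < c) (hm : Measurable w)
    (hw : ∀ x, w x ∈ Set.Icc c C)
    (hτ : ∀ t, travel w (τ t) = travel w t - L) (hτ' : ∀ t, travel w' (τ' t) = travel w' t - L)
    (hD : ∀ t, |travel w t - travel w' t| ≤ D) (t : ℝ) :
    |τ t - τ' t| ≤ 2 * D / c := by
  have h1 := travel_antilipschitz hm hw (τ t) (τ' t)
  have h2 : travel w (τ t) - travel w (τ' t) =
      (travel w t - travel w' t) - (travel w (τ' t) - travel w' (τ' t)) := by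
    rw [hτ, hτ']; ring
  rw [h2] at h1
  have h3 := abs_sub (travel w t - travel w' t) (travel w (τ' t) - travel w' (τ' t))
  rw [le_div_iff₀ hc]
  linarith [hD t, hD (τ' t)]

theorem measurable_travel (hm : Measurable w) (hw : ∀ x, w x ∈ Set.Icc c C) :
    Measurable (travel w) :=
  (intervalIntegral.continuous_primitive
    (fun a b => intervalIntegrable_of_mem hm hw a b) 0).measurable

end

/-! ### The outflow on the whole line -/

/-- The outflow, with initial datum `r`, inflow `i`, policy `w` and entering time `τ` all defined
on the whole line; `τ` is an argument, pinned down in the lemmas below by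
`travel w (τ t) = travel w t - L`. -/
noncomputable def flow (L : ℝ) (r i w τ : ℝ → ℝ) (t : ℝ) : ℝ :=
  if travel w t < L then r (L - travel w t) * w t else i (τ t) * w t / w (τ t)

/-- On `[0,T]` the outflow does not depend on how the data are extended to the line: once
`travel w t ≥ L`, the globally defined `τ t` lies in `[0,t]` and is the infimum `letTime`. -/
theorem outflow_eq_flow {L T c C : ℝ} {v w ρ₀ In r i τ : ℝ → ℝ} (hc : 0 < c) (hL : 0 < L)
    (hm : Measurable w) (hw : ∀ x, w x ∈ Set.Icc c C)
    (hτ : ∀ t, travel w (τ t) = travel w t - L)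
    (hv : ∀ t ∈ Set.Icc 0 T, w t = v t) (hr : ∀ x ∈ Set.Icc 0 L, r x = ρ₀ x)
    (hi : ∀ t ∈ Set.Icc 0 T, i t = In t) {t : ℝ} (ht : t ∈ Set.Icc 0 T) :
    outflow L ρ₀ In v t = flow L r i w τ t := by
  have hs := travel_strictMono hc hm hw
  have h0 : travel w 0 = 0 := intervalIntegral.integral_same
  have hint : ∀ a ∈ Set.Icc 0 T, ∫ s in a..t, v s = travel w t - travel w a := by
    intro a ha
    rw [travel_sub hm hw]
    refine (intervalIntegral.integral_congr fun s hs => hv s ?_).symm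
    exact Set.uIcc_subset_Icc ha ht hs
  have hT0 : (0 : ℝ) ∈ Set.Icc 0 T := ⟨le_rfl, ht.1.trans ht.2⟩
  have hV0 : ∫ s in (0 : ℝ)..t, v s = travel w t := by rw [hint 0 hT0, h0, sub_zero]
  have hVt : 0 ≤ travel w t := h0 ▸ hs.monotone ht.1
  unfold outflow flow
  rw [hV0]
  split_ifs with h
  · rw [hr _ ⟨by linarith, by linarith⟩, hv t ht]
  · have hτ0 : 0 ≤ τ t := by
      rw [← hs.le_iff_le, h0, hτ]; linarith
    have hτt : τ t ≤ t := by
      rw [← hs.le_iff_le, hτ]; linarith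
    have hτm : τ t ∈ Set.Icc 0 T := ⟨hτ0, hτt.trans ht.2⟩
    have hlet : letTime L v t = τ t := by
      refine IsLeast.csInf_eq ⟨⟨hτ0, ?_⟩, ?_⟩
      · rw [hint _ hτm, hτ]; linarith
      · rintro u ⟨hu0, hu⟩
        by_contra hlt
        push Not at hlt
        rw [hint u ⟨hu0, hlt.le.trans hτm.2⟩] at hu
        have := hs hlt
        rw [hτ] at this
        linarith
    rw [hlet, hi _ hτm, hv t ht, hv _ hτm]

theorem measurable_flow {L c C : ℝ} {w r i τ : ℝ → ℝ}
    (hm : Measurable w) (hw : ∀ x, w x ∈ Set.Icc c C) (hr : Measurable r) (hi : Measurable i)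
    (hτ : Measurable τ) : Measurable (flow L r i w τ) := by
  have hV := measurable_travel hm hw
  unfold flow
  exact Measurable.ite (measurableSet_lt hV measurable_const)
    ((hr.comp (hV.const_sub L)).mul hm) (((hi.comp hτ).mul hm).div (hm.comp hτ))

theorem flow_mem {L c C P F : ℝ} {w r i τ : ℝ → ℝ} (hc : 0 < c)
    (hw : ∀ x, w x ∈ Set.Icc c C) (hr : ∀ x, r x ∈ Set.Icc 0 P) (hi : ∀ x, i x ∈ Set.Icc 0 F)
    (t : ℝ) : flow L r i w τ t ∈ Set.Icc 0 (P * C + F * C / c) := by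
  have hwp : ∀ x, 0 < w x := fun x => hc.trans_le (hw x).1
  have hC : 0 < C := (hwp 0).trans_le (hw 0).2
  have hP : 0 ≤ P := (hr 0).1.trans (hr 0).2
  have hF : 0 ≤ F := (hi 0).1.trans (hi 0).2
  have a1 : 0 ≤ P * C := by positivity
  have a2 : 0 ≤ F * C / c := by positivity
  unfold flow
  split_ifs
  · have h1 : r (L - travel w t) * w t ≤ P * C :=
      mul_le_mul (hr _).2 (hw t).2 (hwp t).le hP
    exact ⟨mul_nonneg (hr _).1 (hwp t).le, by linarith⟩
  · have h1 : i (τ t) * w t / w (τ t) ≤ F * C / c :=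
      div_le_div₀ (by positivity) (mul_le_mul (hi _).2 (hw t).2 (hwp t).le hF) hc (hw _).1
    exact ⟨div_nonneg (mul_nonneg (hi _).1 (hwp t).le) (hwp _).le, by linarith⟩

theorem abs_mul_div_sub_le {c C F a a' b b' d d' : ℝ} (hc : 0 < c) (ha : a ∈ Set.Icc 0 F)
    (ha' : a' ∈ Set.Icc 0 F) (hb : b ∈ Set.Icc c C) (hb' : b' ∈ Set.Icc c C)
    (hd : d ∈ Set.Icc c C) (hd' : d' ∈ Set.Icc c C) :
    |a * b / d - a' * b' / d'| ≤
      C / c * |a - a'| + F / c * |b - b'| + F * C / c ^ 2 * |d - d'| := by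
  have hdp : 0 < d := hc.trans_le hd.1
  have hdp' : 0 < d' := hc.trans_le hd'.1
  have hbp : 0 < b := hc.trans_le hb.1
  have hbp' : 0 < b' := hc.trans_le hb'.1
  have hC : 0 < C := hbp.trans_le hb.2
  have hF : 0 ≤ F := ha.1.trans ha.2
  have e : a * b / d - a' * b' / d' =
      b / d * (a - a') + a' / d * (b - b') + a' * b' / (d * d') * (d' - d) := by
    field_simp; ring
  rw [e]
  have h1 : |b / d * (a - a')| ≤ C / c * |a - a'| := by
    rw [abs_mul, abs_of_nonneg (by positivity : 0 ≤ b / d)]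
    exact mul_le_mul_of_nonneg_right (div_le_div₀ hC.le hb.2 hc hd.1) (abs_nonneg _)
  have h2 : |a' / d * (b - b')| ≤ F / c * |b - b'| := by
    rw [abs_mul, abs_of_nonneg (div_nonneg ha'.1 hdp.le)]
    exact mul_le_mul_of_nonneg_right (div_le_div₀ hF ha'.2 hc hd.1) (abs_nonneg _)
  have h3 : |a' * b' / (d * d') * (d' - d)| ≤ F * C / c ^ 2 * |d - d'| := by
    rw [abs_mul, abs_of_nonneg (div_nonneg (mul_nonneg ha'.1 hbp'.le) (by positivity)),
      abs_sub_comm d' d, sq]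
    exact mul_le_mul_of_nonneg_right (div_le_div₀ (by positivity)
      (mul_le_mul ha'.2 hb'.2 hbp'.le hF) (by positivity)
      (mul_le_mul hd.1 hd'.1 hc.le hdp.le)) (abs_nonneg _)
  exact (abs_add_three _ _ _).trans (add_le_add (add_le_add h1 h2) h3)

/-- Pointwise comparison of two outflows. The indicator term accounts for the times at which
exactly one of the two policies has already covered the distance `L`; then `travel w t` is within
`D` of `L`. -/
theorem abs_flow_sub_le {L c C P F D : ℝ} {w w' r i τ τ' : ℝ → ℝ} (hc : 0 < c)
    (hw : ∀ x, w x ∈ Set.Icc c C) (hw' : ∀ x, w' x ∈ Set.Icc c C)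
    (hr : ∀ x, r x ∈ Set.Icc 0 P) (hi : ∀ x, i x ∈ Set.Icc 0 F) {t : ℝ}
    (hD : |travel w t - travel w' t| ≤ D) :
    |flow L r i w τ t - flow L r i w' τ' t| ≤
      (P + F / c) * |w t - w' t| + C * |r (L - travel w t) - r (L - travel w' t)| +
      C / c * |i (τ t) - i (τ' t)| + F * C / c ^ 2 * |w (τ t) - w' (τ' t)| +
      (P * C + F * C / c) * (Set.Icc (-D) D).indicator 1 (travel w t - L) := by
  have hC : 0 < C := hc.trans_le ((hw 0).1.trans (hw 0).2)
  have hP : 0 ≤ P := (hr 0).1.trans (hr 0).2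
  have hF : 0 ≤ F := (hi 0).1.trans (hi 0).2
  have hM := flow_mem (L := L) (τ := τ) hc hw hr hi t
  have hM' := flow_mem (L := L) (τ := τ') hc hw' hr hi t
  have hmix : travel w t - L ∈ Set.Icc (-D) D → |flow L r i w τ t - flow L r i w' τ' t| ≤
      (P * C + F * C / c) * (Set.Icc (-D) D).indicator 1 (travel w t - L) := fun h => by
    rw [Set.indicator_of_mem h, Pi.one_apply, mul_one, abs_le]
    constructor <;> linarith [hM.1, hM.2, hM'.1, hM'.2]
  have n1 : 0 ≤ P * |w t - w' t| := by positivity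
  have n2 : 0 ≤ F / c * |w t - w' t| := by positivity
  have n3 : 0 ≤ C * |r (L - travel w t) - r (L - travel w' t)| := by positivity
  have n4 : 0 ≤ C / c * |i (τ t) - i (τ' t)| := by positivity
  have n5 : 0 ≤ F * C / c ^ 2 * |w (τ t) - w' (τ' t)| := by positivity
  have n6 : 0 ≤ (P * C + F * C / c) *
      (Set.Icc (-D) D).indicator (1 : ℝ → ℝ) (travel w t - L) :=
    mul_nonneg (by positivity) (Set.indicator_nonneg (fun _ _ => zero_le_one) _)
  obtain ⟨hD1, hD2⟩ := abs_le.1 hD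
  by_cases h : travel w t < L <;> by_cases h' : travel w' t < L
  · have e : flow L r i w τ t - flow L r i w' τ' t =
        r (L - travel w' t) * (w t - w' t) +
          w t * (r (L - travel w t) - r (L - travel w' t)) := by
      simp only [flow, if_pos h, if_pos h']; ring
    have b1 : |r (L - travel w' t) * (w t - w' t)| ≤ P * |w t - w' t| := by
      rw [abs_mul, abs_of_nonneg (hr _).1]
      exact mul_le_mul_of_nonneg_right (hr _).2 (abs_nonneg _)
    have b2 : |w t * (r (L - travel w t) - r (L - travel w' t))| ≤
        C * |r (L - travel w t) - r (L - travel w' t)| := by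
      rw [abs_mul, abs_of_nonneg (hc.le.trans (hw t).1)]
      exact mul_le_mul_of_nonneg_right (hw t).2 (abs_nonneg _)
    rw [e]
    linarith [abs_add_le (r (L - travel w' t) * (w t - w' t))
      (w t * (r (L - travel w t) - r (L - travel w' t)))]
  · linarith [hmix ⟨by linarith, by linarith⟩]
  · linarith [hmix ⟨by linarith, by linarith⟩]
  · have e : flow L r i w τ t - flow L r i w' τ' t =
        i (τ t) * w t / w (τ t) - i (τ' t) * w' t / w' (τ' t) := by
      simp only [flow, if_neg h, if_neg h']
    have hq := abs_mul_div_sub_le hc (hi (τ t)) (hi (τ' t)) (hw t) (hw' t) (hw (τ t)) (hw' (τ' t))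
    rw [e]
    linarith [hq]

/-! ### The `L¹` estimate and the cost -/

/-- Together with `Dominates.abs_sub_le_increment`, this gives `∫ |g (φ t) - g (ψ t)| dt ≤ 2δR/c`
whenever `|φ - ψ| ≤ δ` and `φ` expands distances by at least `c`. -/
theorem Dominates.integral_comp_increment_le {G g φ : ℝ → ℝ} {R c δ : ℝ} (h : Dominates R G g)
    (hc : 0 < c) (hφm : Measurable φ) (hφ : ∀ x y, c * |x - y| ≤ |φ x - φ y|) (hδ : 0 ≤ δ) :
    Integrable (fun t => G (φ t + δ) - G (φ t - δ)) ∧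
      ∫ t, (G (φ t + δ) - G (φ t - δ)) ≤ c⁻¹ * (2 * δ * R) := by
  obtain ⟨h1, h2⟩ := integral_increment_le h.monotone h.nonneg h.le hδ
  have hm : Measurable (fun x => G (x + δ) - G (x - δ)) :=
    (h.monotone.measurable.comp (measurable_id.add_const δ)).sub
      (h.monotone.measurable.comp (measurable_id.sub_const δ))
  obtain ⟨h3, h4⟩ := integral_comp_le hc hφm hφ hm
    (fun x => sub_nonneg.2 (h.monotone (by linarith))) h1
  exact ⟨h3, h4.trans (mul_le_mul_of_nonneg_left h2 (inv_nonneg.2 hc.le))⟩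

/-- The `L¹` estimate `∫ |flow - flow'| ≤ const · ‖w - w'‖`, with a constant depending only on the
bounds and variations of the data. -/
theorem exists_flow_majorant {L c C P F Rr Ri Rw : ℝ} {w w' r i τ τ' Gr Gi Gw : ℝ → ℝ}
    (hc : 0 < c)
    (hw : ∀ x, w x ∈ Set.Icc c C) (hw' : ∀ x, w' x ∈ Set.Icc c C) (hm' : Measurable w')
    (hr : ∀ x, r x ∈ Set.Icc 0 P) (hi : ∀ x, i x ∈ Set.Icc 0 F)
    (hGr : Dominates Rr Gr r) (hGi : Dominates Ri Gi i) (hGw : Dominates Rw Gw w)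
    (hτ : ∀ t, travel w (τ t) = travel w t - L) (hτ' : ∀ t, travel w' (τ' t) = travel w' t - L)
    (hint : Integrable fun x => |w x - w' x|) :
    ∃ H : ℝ → ℝ, Integrable H ∧
      (∀ t, |flow L r i w τ t - flow L r i w' τ' t| ≤ H t) ∧
      ∫ t, H t ≤ ((P + F / c) + C * (c⁻¹ * (2 * Rr)) +
        C / c * ((c / C)⁻¹ * (2 * (2 / c) * Ri)) +
        F * C / c ^ 2 * ((c / C)⁻¹ * (2 * (2 / c) * Rw) + (c / C)⁻¹) +
        (P * C + F * C / c) * (c⁻¹ * 2)) * ∫ x, |w x - w' x| := by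
  have hC : 0 < C := hc.trans_le ((hw 0).1.trans (hw 0).2)
  have hP : 0 ≤ P := (hr 0).1.trans (hr 0).2
  have hF : 0 ≤ F := (hi 0).1.trans (hi 0).2
  have hm := hGw.measurable
  set D := ∫ x, |w x - w' x| with hDdef
  have hD0 : 0 ≤ D := integral_nonneg fun x => abs_nonneg _
  have hδ0 : 0 ≤ 2 * D / c := by positivity
  have hVV := abs_travel_sub_le hm hw hm' hw' hint
  have hττ := abs_delay_sub_le hc hm hw hτ hτ' hVV
  have hV := measurable_travel hm hw
  have hτm := (delay_strictMono hc hm hw hτ).monotone.measurable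
  have hτm' := (delay_strictMono hc hm' hw' hτ').monotone.measurable
  have hcC : 0 < c / C := by positivity
  have hVa := travel_antilipschitz hm hw
  obtain ⟨r1, r2⟩ := hGr.integral_comp_increment_le (φ := fun t => L - travel w t) hc
    (hV.const_sub L) (fun x y => by
      rw [show L - travel w x - (L - travel w y) = -(travel w x - travel w y) by ring, abs_neg]
      exact hVa x y) hD0
  obtain ⟨i1, i2⟩ := hGi.integral_comp_increment_le hcC hτm
    (delay_antilipschitz hc hm hw hτ) hδ0
  obtain ⟨w1, w2⟩ := hGw.integral_comp_increment_le hcC hτm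
    (delay_antilipschitz hc hm hw hτ) hδ0
  obtain ⟨d1, d2⟩ := integral_comp_le (h := fun x => |w x - w' x|) hcC hτm'
    (delay_antilipschitz hc hm' hw' hτ') (by fun_prop) (fun x => abs_nonneg _) hint
  obtain ⟨m1, m2⟩ := integral_comp_le (h := (Set.Icc (-D) D).indicator 1)
    (φ := fun t => travel w t - L) hc
    (hV.sub_const L) (fun x y => by rw [sub_sub_sub_cancel_right]; exact hVa x y)
    (measurable_one.indicator measurableSet_Icc)
    (fun x => Set.indicator_nonneg (fun _ _ => zero_le_one) _)
    ((integrable_indicator_iff measurableSet_Icc).2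
      (integrableOn_const (C := (1 : ℝ)) (by simp)))
  have m3 : ∫ t, (Set.Icc (-D) D).indicator (1 : ℝ → ℝ) t = 2 * D := by
    rw [integral_indicator_one measurableSet_Icc, Real.volume_real_Icc_of_le (by linarith)]
    ring
  rw [m3] at m2
  have j1 := hint.const_mul (P + F / c)
  have j2 := r1.const_mul C
  have j3 := i1.const_mul (C / c)
  have j4 := (w1.add d1).const_mul (F * C / c ^ 2)
  have j5 := m1.const_mul (P * C + F * C / c)
  refine ⟨_, (((j1.add j2).add j3).add j4).add j5, fun t => ?_, ?_⟩
  · refine (abs_flow_sub_le hc hw hw' hr hi (hVV t)).trans ?_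
    have k2 : |r (L - travel w t) - r (L - travel w' t)| ≤
        Gr (L - travel w t + D) - Gr (L - travel w t - D) := by
      apply hGr.abs_sub_le_increment
      rw [sub_sub_sub_cancel_left, abs_sub_comm]
      exact hVV t
    have k3 := hGi.abs_sub_le_increment (hττ t)
    -- Pass through `w (τ' t)`: a shift of the argument of `w`, then `|w - w'|` at the same point.
    have k4 : |w (τ t) - w' (τ' t)| ≤
        Gw (τ t + 2 * D / c) - Gw (τ t - 2 * D / c) + |w (τ' t) - w' (τ' t)| :=
      (abs_sub_le _ (w (τ' t)) _).trans (by gcongr; exact hGw.abs_sub_le_increment (hττ t))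
    simp only [Pi.add_apply]
    gcongr
  · rw [integral_add' (((j1.add j2).add j3).add j4) j5, integral_add' ((j1.add j2).add j3) j4,
      integral_add' (j1.add j2) j3, integral_add' j1 j2]
    simp only [integral_const_mul]
    rw [integral_add' w1 d1]
    have e : ((P + F / c) + C * (c⁻¹ * (2 * Rr)) +
        C / c * ((c / C)⁻¹ * (2 * (2 / c) * Ri)) +
        F * C / c ^ 2 * ((c / C)⁻¹ * (2 * (2 / c) * Rw) + (c / C)⁻¹) +
        (P * C + F * C / c) * (c⁻¹ * 2)) * D =
        (P + F / c) * D + C * (c⁻¹ * (2 * D * Rr)) +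
        C / c * ((c / C)⁻¹ * (2 * (2 * D / c) * Ri)) +
        F * C / c ^ 2 * ((c / C)⁻¹ * (2 * (2 * D / c) * Rw) + (c / C)⁻¹ * D) +
        (P * C + F * C / c) * (c⁻¹ * (2 * D)) := by ring
    rw [e]
    gcongr

/-- From an `L¹` estimate for bounded outflows to their quadratic costs, by
`a² - b² = (a + b)(a - b)`. -/
theorem abs_trackCost_sub_le {T M F B : ℝ} {O O' f H : ℝ → ℝ} (hT : 0 ≤ T)
    (hO : Measurable O) (hO' : Measurable O') (hf : Measurable f)
    (hOm : ∀ t, O t ∈ Set.Icc 0 M) (hOm' : ∀ t, O' t ∈ Set.Icc 0 M)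
    (hfm : ∀ t, f t ∈ Set.Icc 0 F) (hH : Integrable H) (hle : ∀ t, |O t - O' t| ≤ H t)
    (hB : ∫ t, H t ≤ B) :
    |(∫ t in (0 : ℝ)..T, (O t - f t) ^ 2) - ∫ t in (0 : ℝ)..T, (O' t - f t) ^ 2| ≤
      (2 * M + 2 * F) * B := by
  have hM : 0 ≤ M := (hOm 0).1.trans (hOm 0).2
  have hF : 0 ≤ F := (hfm 0).1.trans (hfm 0).2
  have hsq : ∀ {Q : ℝ → ℝ}, Measurable Q → (∀ t, Q t ∈ Set.Icc 0 M) →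
      IntervalIntegrable (fun t => (Q t - f t) ^ 2) volume 0 T := fun {Q} hQ hQm => by
    refine intervalIntegrable_of_mem (c := 0) (C := (M + F) ^ 2) (by fun_prop) (fun t => ?_) 0 T
    exact ⟨sq_nonneg _, sq_le_sq' (by linarith [(hQm t).1, (hfm t).2])
      (by linarith [(hQm t).2, (hfm t).1])⟩
  rw [← intervalIntegral.integral_sub (hsq hO hOm) (hsq hO' hOm'),
    intervalIntegral.integral_of_le hT, ← Real.norm_eq_abs]
  have hH0 : ∀ t, 0 ≤ H t := fun t => (abs_nonneg _).trans (hle t)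
  have hk : 0 ≤ 2 * M + 2 * F := by positivity
  refine (norm_integral_le_of_norm_le (hH.const_mul (2 * M + 2 * F)).integrableOn
    (Eventually.of_forall fun t => ?_)).trans ?_
  · rw [Real.norm_eq_abs, show (O t - f t) ^ 2 - (O' t - f t) ^ 2 =
      (O t + O' t - 2 * f t) * (O t - O' t) by ring, abs_mul]
    refine mul_le_mul (abs_le.2 ⟨?_, ?_⟩) (hle t) (abs_nonneg _) hk
    · linarith [(hOm t).1, (hOm' t).1, (hfm t).2]
    · linarith [(hOm t).2, (hOm' t).2, (hfm t).1]
  · refine (setIntegral_le_integral (hH.const_mul _)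
      (Eventually.of_forall fun t => mul_nonneg hk (hH0 t))).trans ?_
    rw [integral_const_mul]
    exact mul_le_mul_of_nonneg_left hB hk

theorem integral_abs_extendBy_sub {T k : ℝ} (hT : 0 ≤ T) (v v' : ℝ → ℝ) :
    ∫ x, |extendBy 0 T k v x - extendBy 0 T k v' x| = ∫ t in (0 : ℝ)..T, |v t - v' t| := by
  have : (fun x => |extendBy 0 T k v x - extendBy 0 T k v' x|) =
      (Set.Icc 0 T).indicator fun x => |v x - v' x| := by
    ext x
    by_cases hx : x ∈ Set.Icc 0 T <;> simp [extendBy, hx, -Set.mem_Icc]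
  rw [this, integral_indicator measurableSet_Icc, integral_Icc_eq_integral_Ioc,
    intervalIntegral.integral_of_le hT]

theorem integrable_abs_extendBy_sub {T k lo hi : ℝ} {v v' : ℝ → ℝ}
    (hm : Measurable (extendBy 0 T k v)) (hm' : Measurable (extendBy 0 T k v'))
    (hw : ∀ x, extendBy 0 T k v x ∈ Set.Icc lo hi)
    (hw' : ∀ x, extendBy 0 T k v' x ∈ Set.Icc lo hi) :
    Integrable fun x => |extendBy 0 T k v x - extendBy 0 T k v' x| := by
  have h : IntegrableOn (fun x => |extendBy 0 T k v x - extendBy 0 T k v' x|) (Set.Icc 0 T) := by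
    refine Measure.integrableOn_of_bounded (M := hi - lo) (by simp)
      (by fun_prop) (Eventually.of_forall fun x => ?_)
    rw [Real.norm_eq_abs, abs_abs, abs_le]
    constructor <;> linarith [(hw x).1, (hw x).2, (hw' x).1, (hw' x).2]
  refine (integrableOn_iff_integrable_of_support_subset fun x hx => ?_).1 h
  by_contra hn
  exact hx (by simp [extendBy, hn, -Set.mem_Icc])

/-- On `Ω = {v ∈ BV([0,T],[v_min,C]) : TV(v) ≤ K}`, the cost functional `J`
is Lipschitz continuous with respect to the `L¹([0,T])` norm. -/
theorem stmt_8 (L T vmin C K fmin fmax ρmin ρcr : ℝ)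
    (hL : 0 < L) (hT : 0 < T) (hvmin : 0 < vmin) (hC : vmin ≤ C) (hK : 0 < K)
    (hfmin : 0 < fmin) (hff : fmin ≤ fmax) (hρmin : 0 < ρmin) (hρ : ρmin ≤ ρcr)
    (In fstar ρ₀ : ℝ → ℝ)
    (hIn : ∀ t ∈ Set.Icc (0 : ℝ) T, In t ∈ Set.Icc fmin fmax)
    (hInBV : BoundedVariationOn In (Set.Icc 0 T))
    (hfs : ∀ t ∈ Set.Icc (0 : ℝ) T, fstar t ∈ Set.Icc fmin fmax)
    (hfsBV : BoundedVariationOn fstar (Set.Icc 0 T))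
    (hρ₀ : ∀ x ∈ Set.Icc (0 : ℝ) L, ρ₀ x ∈ Set.Icc ρmin ρcr)
    (hρ₀BV : BoundedVariationOn ρ₀ (Set.Icc 0 L)) :
    ∃ C' > 0, ∀ v v' : ℝ → ℝ,
      ((∀ t ∈ Set.Icc (0 : ℝ) T, v t ∈ Set.Icc vmin C) ∧
        eVariationOn v (Set.Icc 0 T) ≤ ENNReal.ofReal K) →
      ((∀ t ∈ Set.Icc (0 : ℝ) T, v' t ∈ Set.Icc vmin C) ∧
        eVariationOn v' (Set.Icc 0 T) ≤ ENNReal.ofReal K) →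
      |trackCost L T ρ₀ In fstar v - trackCost L T ρ₀ In fstar v'| ≤
        C' * ∫ t in (0 : ℝ)..T, |v t - v' t| := by
  have hfm0 : 0 ≤ fmax := hfmin.le.trans hff
  have hsub : ∀ {lo hi x : ℝ}, x ∈ Set.Icc lo hi → |x - lo| ≤ hi - lo := fun h => by
    rw [abs_of_nonneg (sub_nonneg.2 h.1)]; linarith [h.2]
  have hwk : ∀ {lo hi x : ℝ}, 0 < lo → x ∈ Set.Icc lo hi → x ∈ Set.Icc 0 hi :=
    fun h0 h => ⟨h0.le.trans h.1, h.2⟩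
  obtain ⟨Gi, hGi⟩ := exists_dominates (k := fmin) ENNReal.toReal_nonneg (sub_nonneg.2 hff)
    (fun x hx => hsub (hIn x hx)) (ENNReal.ofReal_toReal hInBV).ge
  obtain ⟨Gf, hGf⟩ := exists_dominates (k := fmin) ENNReal.toReal_nonneg (sub_nonneg.2 hff)
    (fun x hx => hsub (hfs x hx)) (ENNReal.ofReal_toReal hfsBV).ge
  obtain ⟨Gr, hGr⟩ := exists_dominates (k := ρmin) ENNReal.toReal_nonneg (sub_nonneg.2 hρ)
    (fun x hx => hsub (hρ₀ x hx)) (ENNReal.ofReal_toReal hρ₀BV).ge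
  have hi := fun x => hwk hfmin (extendBy_mem (k := fmin) ⟨le_rfl, hff⟩ hIn x)
  have hf := fun x => hwk hfmin (extendBy_mem (k := fmin) ⟨le_rfl, hff⟩ hfs x)
  have hr := fun x => hwk hρmin (extendBy_mem (k := ρmin) ⟨le_rfl, hρ⟩ hρ₀ x)
  set M : ℝ := ρcr * C + fmax * C / vmin with hM
  obtain ⟨A, hA⟩ : ∃ A : ℝ, A = (2 * M + 2 * fmax) *
      ((ρcr + fmax / vmin) +
        C * (vmin⁻¹ * (2 * ((eVariationOn ρ₀ (Set.Icc 0 L)).toReal + 2 * (ρcr - ρmin)))) +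
        C / vmin * ((vmin / C)⁻¹ * (2 * (2 / vmin) *
          ((eVariationOn In (Set.Icc 0 T)).toReal + 2 * (fmax - fmin)))) +
        fmax * C / vmin ^ 2 * ((vmin / C)⁻¹ * (2 * (2 / vmin) * (K + 2 * (C - vmin))) +
          (vmin / C)⁻¹) +
        (ρcr * C + fmax * C / vmin) * (vmin⁻¹ * 2)) := ⟨_, rfl⟩
  refine ⟨max A 1, lt_max_of_lt_right one_pos, fun v v' hv hv' => ?_⟩
  obtain ⟨Gw, hGw⟩ := exists_dominates (k := vmin) hK.le (sub_nonneg.2 hC)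
    (fun x hx => hsub (hv.1 x hx)) hv.2
  obtain ⟨Gw', hGw'⟩ := exists_dominates (k := vmin) hK.le (sub_nonneg.2 hC)
    (fun x hx => hsub (hv'.1 x hx)) hv'.2
  have hw := extendBy_mem (k := vmin) ⟨le_rfl, hC⟩ hv.1
  have hw' := extendBy_mem (k := vmin) ⟨le_rfl, hC⟩ hv'.1
  have hm := hGw.measurable
  have hm' := hGw'.measurable
  obtain ⟨τ, hτ⟩ := exists_delay hvmin hL hm hw
  obtain ⟨τ', hτ'⟩ := exists_delay hvmin hL hm' hw'
  have hcost : ∀ {u σ : ℝ → ℝ}, Measurable (extendBy 0 T vmin u) →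
      (∀ x, extendBy 0 T vmin u x ∈ Set.Icc vmin C) →
      (∀ t, travel (extendBy 0 T vmin u) (σ t) = travel (extendBy 0 T vmin u) t - L) →
      trackCost L T ρ₀ In fstar u = ∫ t in (0 : ℝ)..T,
        (flow L (extendBy 0 L ρmin ρ₀) (extendBy 0 T fmin In) (extendBy 0 T vmin u) σ t -
          extendBy 0 T fmin fstar t) ^ 2 := by
    intro u σ hum hu hσ
    refine intervalIntegral.integral_congr fun t ht => ?_
    rw [Set.uIcc_of_le hT.le] at ht
    rw [outflow_eq_flow hvmin hL hum hu hσ (fun t ht => extendBy_of_mem ht)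
      (fun t ht => extendBy_of_mem ht) (fun t ht => extendBy_of_mem ht) ht, extendBy_of_mem ht]
  obtain ⟨H, hH, hle, hHB⟩ := exists_flow_majorant hvmin hw hw' hm' hr hi hGr hGi hGw hτ hτ'
    (integrable_abs_extendBy_sub hm hm' hw hw')
  rw [integral_abs_extendBy_sub hT.le] at hHB
  rw [hcost hm hw hτ, hcost hm' hw' hτ']
  refine (abs_trackCost_sub_le hT.le
    (measurable_flow hm hw hGr.measurable hGi.measurable
      (delay_strictMono hvmin hm hw hτ).monotone.measurable)
    (measurable_flow hm' hw' hGr.measurable hGi.measurable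
      (delay_strictMono hvmin hm' hw' hτ').monotone.measurable)
    hGf.measurable (flow_mem hvmin hw hr hi) (flow_mem hvmin hw' hr hi) hf hH hle hHB).trans ?_
  rw [← mul_assoc, ← hM, ← hA]
  exact mul_le_mul_of_nonneg_right (le_max_left _ _)
    (intervalIntegral.integral_nonneg hT.le fun t _ => abs_nonneg _)
end

section
/- Fix K > 0 and C ≥ v_min > 0, and let Ω = { v ∈ BV([0,T], [v_min, C]) : TV(v) ≤ K }. Let In ∈ BV([0,T], [f_min, f_max]) and f* ∈ BV([0,T], [f_min, f_max]) with 0 < f_min ≤ f_max, and let ρ₀ ∈ BV([0,L], [ρ_min, ρ_cr]) with 0 < ρ_min ≤ ρ_cr. For v ∈ Ω define Out_v(t) := ρ₀(L − ∫₀^t v(s) ds)·v(t) if ∫₀^t v(s) ds < L, and Out_v(t) := In(τ_v(t))·v(t)/v(τ_v(t)) otherwise, where τ_v is the LET function of v; set J(v) := ∫₀^T (Out_v(t) − f*(t))² dt. Then J attains its minimum on Ω: there exists v* ∈ Ω such that J(v*) ≤ J(v) for every v ∈ Ω. -/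
open MeasureTheory Filter Topology

/-!
The minimiser is found by the direct method; the point is to choose a mode of convergence for which
both compactness and continuity of the cost are elementary.

*Compactness* (`helly_selection`). A policy of bounded variation is a difference of two uniformly
bounded monotone functions. Along a free ultrafilter these converge at every point, and testing
finitely many points of a dense sequence at each stage gives a genuine subsequence converging on
that dense set. For monotone functions this already forces, at every continuity point `x` of the
limit, convergence along moving arguments: `v k (s k) → w x` whenever `s k → x`
(`tendsto_moving_of_monotone`). So this *continuous convergence* holds off a countable set, while
pointwise convergence along the ultrafilter makes the total variation lower semicontinuous.

*Continuity of the cost* (`tendsto_trackCost`). The distances travelled converge by dominated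
convergence, and since they grow at rate at least `v_min`, the entering times converge too.
Continuous convergence is exactly what is needed to pass to the limit in `v k (τ k t)`, whose
argument moves with `k`. The exceptional times are preimages of countable sets under the injective
distance map, so outflows converge almost everywhere; they are uniformly bounded, and dominated
convergence applies.

All functions are first extended by constants beyond the ends of their intervals (`clampExt`),
which changes neither the cost (`trackCost_congr`) nor the bounds, and does not increase the
variation.
-/

/-! ### Functions of bounded variation and Helly's theorem -/

theorem BVu.exists_mono {f : ℝ → ℝ} (hf : BoundedVariationOn f Set.univ) :
    ∃ p q : ℝ → ℝ, Monotone p ∧ Monotone q ∧ (∀ x, f x = p x - q x) := by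
  refine ⟨variationOnFromTo f Set.univ 0, variationOnFromTo f Set.univ 0 - f, ?_, ?_, ?_⟩
  · exact monotoneOn_univ.1
      (variationOnFromTo.monotoneOn hf.locallyBoundedVariationOn (Set.mem_univ 0))
  · exact monotoneOn_univ.1
      (variationOnFromTo.sub_self_monotoneOn hf.locallyBoundedVariationOn (Set.mem_univ 0))
  · intro x; simp

theorem BVu.countable_disc {f : ℝ → ℝ} (hf : BoundedVariationOn f Set.univ) :
    {x | ¬ ContinuousAt f x}.Countable := by
  obtain ⟨p, q, hp, hq, h⟩ := BVu.exists_mono hf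
  refine (hp.countable_not_continuousAt.union hq.countable_not_continuousAt).mono ?_
  intro x hx
  by_contra hc
  simp only [Set.mem_union, Set.mem_ofPred_eq, not_or, not_not] at hc
  have : f = fun x => p x - q x := funext h
  exact hx (this ▸ hc.1.sub hc.2)

theorem BVu.measurable {f : ℝ → ℝ} (hf : BoundedVariationOn f Set.univ) : Measurable f :=
  measurable_of_countable_not_continuousAt (BVu.countable_disc hf)

/-- Monotone functions converging on a dense set converge continuously at every continuity point
of the limit: `p k (s k) → g x` whenever `s k → x`. -/
theorem tendsto_moving_of_monotone {p : ℕ → ℝ → ℝ} (hp : ∀ k, Monotone (p k)) {g : ℝ → ℝ}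
    {d : ℕ → ℝ} (hd : DenseRange d)
    (hlim : ∀ i, Tendsto (fun k => p k (d i)) atTop (𝓝 (g (d i))))
    {x : ℝ} (hg : ContinuousAt g x) {s : ℕ → ℝ} (hs : Tendsto s atTop (𝓝 x)) :
    Tendsto (fun k => p k (s k)) atTop (𝓝 (g x)) := by
  rw [tendsto_order]
  constructor
  · intro a ha
    obtain ⟨l, u, hx, hlu⟩ := mem_nhds_iff_exists_Ioo_subset.1 (hg.eventually (lt_mem_nhds ha))
    obtain ⟨_, ⟨i, rfl⟩, hi⟩ := hd.exists_between hx.1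
    have h1 : a < g (d i) := hlu ⟨hi.1, hi.2.trans hx.2⟩
    filter_upwards [(hlim i).eventually (lt_mem_nhds h1), hs.eventually (lt_mem_nhds hi.2)]
      with k hk1 hk2
    exact hk1.trans_le (hp k hk2.le)
  · intro a ha
    obtain ⟨l, u, hx, hlu⟩ := mem_nhds_iff_exists_Ioo_subset.1 (hg.eventually (gt_mem_nhds ha))
    obtain ⟨_, ⟨i, rfl⟩, hi⟩ := hd.exists_between hx.2
    have h1 : g (d i) < a := hlu ⟨hx.1.trans hi.1, hi.2⟩
    filter_upwards [(hlim i).eventually (gt_mem_nhds h1), hs.eventually (gt_mem_nhds hi.1)]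
      with k hk1 hk2
    exact (hp k hk2.le).trans_lt hk1

/-- Helly's selection theorem, with continuous convergence off a countable set. -/
theorem helly_selection {a b K : ℝ} (v : ℕ → ℝ → ℝ) (hv : ∀ n x, v n x ∈ Set.Icc a b)
    (hvar : ∀ n, eVariationOn (v n) Set.univ ≤ ENNReal.ofReal K) :
    ∃ (w : ℝ → ℝ) (φ : ℕ → ℕ), Tendsto φ atTop atTop ∧ (∀ x, w x ∈ Set.Icc a b) ∧
      eVariationOn w Set.univ ≤ ENNReal.ofReal K ∧
      ∃ S : Set ℝ, S.Countable ∧ ∀ x ∉ S, ∀ s : ℕ → ℝ, Tendsto s atTop (𝓝 x) →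
        Tendsto (fun k => v (φ k) (s k)) atTop (𝓝 (w x)) := by
  have hBV : ∀ n, BoundedVariationOn (v n) Set.univ := fun n =>
    ne_top_of_le_ne_top ENNReal.ofReal_ne_top (hvar n)
  let p : ℕ → ℝ → ℝ := fun n => variationOnFromTo (v n) Set.univ 0
  have hp : ∀ n, Monotone (p n) := fun n => monotoneOn_univ.1
    (variationOnFromTo.monotoneOn (hBV n).locallyBoundedVariationOn (Set.mem_univ 0))
  have hq : ∀ n, Monotone (fun x => p n x - v n x) := fun n => monotoneOn_univ.1
    (variationOnFromTo.sub_self_monotoneOn (hBV n).locallyBoundedVariationOn (Set.mem_univ 0))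
  have hpb : ∀ n x, p n x ∈ Set.Icc (-(ENNReal.ofReal K).toReal) (ENNReal.ofReal K).toReal := by
    intro n x
    rw [Set.mem_Icc, ← abs_le]
    exact (variationOnFromTo.abs_le_eVariationOn (hBV n)).trans
      (ENNReal.toReal_mono ENNReal.ofReal_ne_top (hvar n))
  -- Along a free ultrafilter every bounded sequence converges, hence pointwise limits exist.
  let U : Ultrafilter ℕ := hyperfilter ℕ
  have hU : (U : Filter ℕ) ≤ atTop := Nat.hyperfilter_le_atTop
  have key : ∀ (f : ℕ → ℝ → ℝ) (c e : ℝ), (∀ n x, f n x ∈ Set.Icc c e) →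
      ∃ g : ℝ → ℝ, ∀ x, g x ∈ Set.Icc c e ∧ Tendsto (fun n => f n x) U (𝓝 (g x)) := by
    intro f c e hf
    have : ∀ x, ∃ y ∈ Set.Icc c e, Tendsto (fun n => f n x) U (𝓝 y) := by
      intro x
      obtain ⟨y, hy, hle⟩ := (isCompact_Icc (a := c) (b := e)).ultrafilter_le_nhds
        (U.map (fun n => f n x))
        (le_principal_iff.2 (Filter.mem_map.2 (Filter.univ_mem' (fun n => hf n x))))
      exact ⟨y, hy, hle⟩
    choose g hg using this
    exact ⟨g, hg⟩
  obtain ⟨w, hw⟩ := key v a b hv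
  obtain ⟨g, hg⟩ := key p _ _ hpb
  have hgm : Monotone g := fun x y hxy =>
    le_of_tendsto_of_tendsto' (hg x).2 (hg y).2 (fun n => hp n hxy)
  have hqm : Monotone (fun x => g x - w x) := fun x y hxy =>
    le_of_tendsto_of_tendsto' ((hg x).2.sub (hw x).2) ((hg y).2.sub (hw y).2) (fun n => hq n hxy)
  -- Only finitely many points are tested at each stage, so a genuine subsequence can be extracted.
  obtain ⟨d, hd⟩ := TopologicalSpace.exists_dense_seq ℝ
  have hφ : ∀ k : ℕ, ∃ n, k ≤ n ∧ ∀ i ∈ Finset.range k,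
      |p n (d i) - g (d i)| < 1 / ((k : ℝ) + 1) ∧ |v n (d i) - w (d i)| < 1 / ((k : ℝ) + 1) := by
    intro k
    have hk : (0 : ℝ) < 1 / ((k : ℝ) + 1) := by positivity
    have h1 : ∀ᶠ n in (U : Filter ℕ), ∀ i ∈ Finset.range k,
      |p n (d i) - g (d i)| < 1 / ((k : ℝ) + 1) ∧ |v n (d i) - w (d i)| < 1 / ((k : ℝ) + 1) := by
      rw [Filter.eventually_all_finset]
      intro i _
      have h2 := (Metric.tendsto_nhds.1 (hg (d i)).2) _ hk
      have h3 := (Metric.tendsto_nhds.1 (hw (d i)).2) _ hk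
      filter_upwards [h2, h3] with n h2 h3
      exact ⟨h2, h3⟩
    have h0 : ∀ᶠ n in (U : Filter ℕ), k ≤ n := hU (eventually_ge_atTop k)
    exact (h0.and h1).exists
  choose φ hφ1 hφ2 using hφ
  have hlim : ∀ (f : ℕ → ℝ → ℝ) (h : ℝ → ℝ),
      (∀ k, ∀ i ∈ Finset.range k, |f (φ k) (d i) - h (d i)| < 1 / ((k : ℝ) + 1)) →
      ∀ i, Tendsto (fun k => f (φ k) (d i)) atTop (𝓝 (h (d i))) := by
    intro f h hfh i
    rw [tendsto_iff_dist_tendsto_zero]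
    refine squeeze_zero' (Eventually.of_forall fun _ => dist_nonneg) ?_
      (tendsto_one_div_add_atTop_nhds_zero_nat (𝕜 := ℝ))
    filter_upwards [eventually_gt_atTop i] with k hk
    exact (hfh k i (Finset.mem_range.2 hk)).le
  have hlp := hlim p g fun k i hi => (hφ2 k i hi).1
  have hlv := hlim v w fun k i hi => (hφ2 k i hi).2
  refine ⟨w, φ, tendsto_atTop_mono hφ1 tendsto_id, fun x => (hw x).1, ?_,
    _, hgm.countable_not_continuousAt.union hqm.countable_not_continuousAt, ?_⟩
  · by_contra! hlt
    obtain ⟨n, hn⟩ := (eVariationOn.lowerSemicontinuous_aux (p := (U : Filter ℕ))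
      (fun x _ => (hw x).2) hlt).exists
    exact absurd (hvar n) (not_le.2 hn)
  · intro x hx s hs
    simp only [Set.mem_union, Set.mem_ofPred_eq, not_or, not_not] at hx
    have h1 := tendsto_moving_of_monotone (fun k => hp (φ k)) hd hlp hx.1 hs
    have h2 := tendsto_moving_of_monotone (fun k => hq (φ k)) hd
      (fun i => (hlp i).sub (hlv i)) hx.2 hs
    simpa using h1.sub h2

/-- The distance travelled up to time `t` under the policy `v`. -/
noncomputable def travelled (v : ℝ → ℝ) (t : ℝ) : ℝ := ∫ s in (0 : ℝ)..t, v s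

/-! ### Distance travelled, entering time and outflow of one policy -/

section Policy

variable {m C : ℝ} {v : ℝ → ℝ}

theorem policy_intervalIntegrable (hvm : Measurable v) (hvb : ∀ x, v x ∈ Set.Icc m C) (hm : 0 < m)
    (a b : ℝ) : IntervalIntegrable v volume a b := by
  refine (intervalIntegrable_const (c := C)).mono_fun' hvm.aestronglyMeasurable ?_
  refine Eventually.of_forall fun x => ?_
  simp only
  rw [Real.norm_of_nonneg (hm.le.trans (hvb x).1)]
  exact (hvb x).2

theorem integral_eq_travelled_sub (hvm : Measurable v) (hvb : ∀ x, v x ∈ Set.Icc m C) (hm : 0 < m)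
    (u t : ℝ) : ∫ s in u..t, v s = travelled v t - travelled v u :=
  (intervalIntegral.integral_interval_sub_left (policy_intervalIntegrable hvm hvb hm _ _)
    (policy_intervalIntegrable hvm hvb hm _ _)).symm

theorem mul_sub_le_travelled_sub (hvm : Measurable v) (hvb : ∀ x, v x ∈ Set.Icc m C) (hm : 0 < m)
    {u t : ℝ} (hut : u ≤ t) : m * (t - u) ≤ travelled v t - travelled v u := by
  rw [← integral_eq_travelled_sub hvm hvb hm]
  have := intervalIntegral.integral_mono_on (f := fun _ => m) (g := v) (μ := volume) hut
    intervalIntegrable_const (policy_intervalIntegrable hvm hvb hm _ _) (fun x _ => (hvb x).1)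
  simpa [mul_comm] using this

theorem mul_abs_sub_le_abs_travelled_sub (hvm : Measurable v) (hvb : ∀ x, v x ∈ Set.Icc m C)
    (hm : 0 < m) (u t : ℝ) : m * |t - u| ≤ |travelled v t - travelled v u| := by
  rcases le_total u t with h | h
  · rw [abs_of_nonneg (sub_nonneg.2 h)]
    exact (mul_sub_le_travelled_sub hvm hvb hm h).trans (le_abs_self _)
  · rw [abs_sub_comm, abs_of_nonneg (sub_nonneg.2 h), abs_sub_comm (travelled v t)]
    exact (mul_sub_le_travelled_sub hvm hvb hm h).trans (le_abs_self _)

theorem travelled_strictMono (hvm : Measurable v) (hvb : ∀ x, v x ∈ Set.Icc m C) (hm : 0 < m) :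
    StrictMono (travelled v) := by
  intro u t hut
  have h1 := mul_sub_le_travelled_sub hvm hvb hm hut.le
  have h2 : 0 < m * (t - u) := mul_pos hm (sub_pos.2 hut)
  linarith

theorem travelled_continuous (hvm : Measurable v) (hvb : ∀ x, v x ∈ Set.Icc m C) (hm : 0 < m) :
    Continuous (travelled v) :=
  intervalIntegral.continuous_primitive (policy_intervalIntegrable hvm hvb hm) 0

@[simp] theorem travelled_zero : travelled v 0 = 0 := by simp [travelled]

/-- The inequality defining the entering time cuts out a ray `[τ, ∞)`, and exactly the length `L`
is covered between `τ` and `t`. -/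
theorem exists_letTime_ray (hvm : Measurable v) (hvb : ∀ x, v x ∈ Set.Icc m C) (hm : 0 < m)
    {L t : ℝ} (hL : 0 < L) (ht : 0 ≤ t) (hLt : L ≤ travelled v t) :
    ∃ τ ∈ Set.Icc 0 t, travelled v τ = travelled v t - L ∧
      ∀ u, (∫ s in u..t, v s) ≤ L ↔ τ ≤ u := by
  have h := intermediate_value_Icc ht (travelled_continuous hvm hvb hm).continuousOn
  obtain ⟨τ, hτ, hτe⟩ := h (show travelled v t - L ∈ _ by
    rw [travelled_zero]; constructor <;> linarith)
  refine ⟨τ, hτ, hτe, fun u => ?_⟩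
  rw [integral_eq_travelled_sub hvm hvb hm, ← (travelled_strictMono hvm hvb hm).le_iff_le (a := τ), hτe]
  constructor <;> intro h <;> linarith

/-- The entering time depends only on the values of the policy on the elapsed time interval, and
it satisfies its defining equation. -/
theorem letTime_spec (hvm : Measurable v) (hvb : ∀ x, v x ∈ Set.Icc m C) (hm : 0 < m)
    {L T t : ℝ} (hL : 0 < L) (ht : t ∈ Set.Icc 0 T) (hLt : L ≤ travelled v t)
    {w : ℝ → ℝ} (hw : Set.EqOn w v (Set.Icc 0 T)) :
    letTime L w t ∈ Set.Icc 0 t ∧ travelled v (letTime L w t) = travelled v t - L ∧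
      letTime L w t = letTime L v t := by
  obtain ⟨τ, hτ, hτe, hτl⟩ := exists_letTime_ray hvm hvb hm hL ht.1 hLt
  have key : ∀ {f : ℝ → ℝ}, Set.EqOn f v (Set.Icc 0 T) → letTime L f t = τ := by
    intro f hf
    have hint : ∀ u ∈ Set.Icc 0 t, ∫ s in u..t, f s = ∫ s in u..t, v s := by
      intro u hu
      refine intervalIntegral.integral_congr fun s hs => hf ?_
      rw [Set.uIcc_of_le hu.2] at hs
      exact ⟨hu.1.trans hs.1, hs.2.trans ht.2⟩
    refine IsLeast.csInf_eq ⟨⟨hτ.1, ?_⟩, ?_⟩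
    · rw [hint τ hτ, hτl]
    · rintro u ⟨hu0, hu⟩
      by_contra! hlt
      rw [hint u ⟨hu0, hlt.le.trans hτ.2⟩, hτl] at hu
      exact absurd hu (not_le.2 hlt)
  rw [key hw, key (Set.eqOn_refl _ _)]
  exact ⟨hτ, hτe, rfl⟩

/-- The entering time is monotone on the whole line, with no restriction on the distance travelled:
the defining sets shrink as `t` grows. -/
theorem letTime_monotone (hvm : Measurable v) (hvb : ∀ x, v x ∈ Set.Icc m C) (hm : 0 < m)
    {L : ℝ} (hL : 0 < L) : Monotone (letTime L v) := by
  intro t t' htt'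
  refine csInf_le_csInf ⟨0, fun u hu => hu.1⟩ ⟨max t' 0, le_max_right _ _, ?_⟩ ?_
  · rw [integral_eq_travelled_sub hvm hvb hm]
    have := (travelled_strictMono hvm hvb hm).monotone (le_max_left t' 0)
    linarith
  · rintro u ⟨hu0, hu⟩
    refine ⟨hu0, ?_⟩
    rw [integral_eq_travelled_sub hvm hvb hm] at hu ⊢
    have := (travelled_strictMono hvm hvb hm).monotone htt'
    linarith

theorem outflow_measurable (hvm : Measurable v) (hvb : ∀ x, v x ∈ Set.Icc m C) (hm : 0 < m)
    {L : ℝ} (hL : 0 < L) {ρ In : ℝ → ℝ} (hρ : Measurable ρ) (hIn : Measurable In) :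
    Measurable (outflow L ρ In v) := by
  have hD : Measurable (fun t => ∫ s in (0 : ℝ)..t, v s) :=
    (travelled_continuous hvm hvb hm).measurable
  have hτ : Measurable (letTime L v) := (letTime_monotone hvm hvb hm hL).measurable
  exact Measurable.ite (measurableSet_lt hD measurable_const)
    ((hρ.comp (measurable_const.sub hD)).mul hvm)
    (((hIn.comp hτ).mul hvm).div (hvm.comp hτ))

theorem abs_outflow_le (hvb : ∀ x, v x ∈ Set.Icc m C) (hm : 0 < m)
    {L R F : ℝ} {ρ In : ℝ → ℝ} (hR : ∀ x, |ρ x| ≤ R) (hF : ∀ x, |In x| ≤ F) (t : ℝ) :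
    |outflow L ρ In v t| ≤ R * C + F * C / m := by
  have hR0 : 0 ≤ R := (abs_nonneg _).trans (hR 0)
  have hF0 : 0 ≤ F := (abs_nonneg _).trans (hF 0)
  have hC0 : 0 ≤ C := hm.le.trans ((hvb 0).1.trans (hvb 0).2)
  have habs : ∀ x, |v x| = v x := fun x => abs_of_nonneg (hm.le.trans (hvb x).1)
  unfold outflow
  split_ifs
  · rw [abs_mul, habs]
    have h1 := mul_le_mul (hR (L - ∫ s in (0 : ℝ)..t, v s)) (hvb t).2
      (hm.le.trans (hvb t).1) hR0
    have h2 : 0 ≤ F * C / m := by positivity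
    linarith
  · rw [abs_div, abs_mul, habs, habs]
    have h1 : |In (letTime L v t)| * v t / v (letTime L v t) ≤ F * C / m :=
      div_le_div₀ (by positivity)
        (mul_le_mul (hF _) (hvb t).2 (hm.le.trans (hvb t).1) hF0) hm (hvb _).1
    have h2 : 0 ≤ R * C := by positivity
    linarith

/-- The cost sees the policy and the data only on their natural domains. -/
theorem trackCost_congr (hvm : Measurable v) (hvb : ∀ x, v x ∈ Set.Icc m C) (hm : 0 < m)
    {L T : ℝ} (hL : 0 < L) (hT : 0 < T) {w ρ ρ' In In' f f' : ℝ → ℝ}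
    (hw : Set.EqOn w v (Set.Icc 0 T)) (hρ : Set.EqOn ρ ρ' (Set.Icc 0 L))
    (hIn : Set.EqOn In In' (Set.Icc 0 T)) (hf : Set.EqOn f f' (Set.Icc 0 T)) :
    trackCost L T ρ In f w = trackCost L T ρ' In' f' v := by
  refine intervalIntegral.integral_congr fun t ht => ?_
  rw [Set.uIcc_of_le hT.le] at ht
  have hint : ∫ s in (0 : ℝ)..t, w s = travelled v t := by
    refine intervalIntegral.integral_congr fun s hs => hw ?_
    rw [Set.uIcc_of_le ht.1] at hs
    exact ⟨hs.1, hs.2.trans ht.2⟩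
  have hint' : ∫ s in (0 : ℝ)..t, v s = travelled v t := rfl
  have h0 : 0 ≤ travelled v t := by
    have := (travelled_strictMono hvm hvb hm).monotone ht.1
    rwa [travelled_zero] at this
  have hout : outflow L ρ In w t = outflow L ρ' In' v t := by
    unfold outflow
    rw [hint, hint']
    split_ifs with h
    · rw [hw ht, hρ ⟨by linarith, by linarith⟩]
    · obtain ⟨h1, -, h3⟩ := letTime_spec hvm hvb hm hL ht (not_lt.1 h) hw
      have h4 : letTime L w t ∈ Set.Icc 0 T := ⟨h1.1, h1.2.trans ht.2⟩
      rw [hw ht, hw h4, hIn h4, h3]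
  simp only [hout, hf ht]

end Policy

/-! ### Continuity of the cost along convergent sequences of policies -/

section Convergence

variable {m C : ℝ} {v : ℕ → ℝ → ℝ} {w : ℝ → ℝ}

theorem tendsto_travelled (hvm : ∀ n, Measurable (v n)) (hvb : ∀ n x, v n x ∈ Set.Icc m C)
    (hm : 0 < m) {S : Set ℝ} (hS : S.Countable)
    (hlim : ∀ x ∉ S, Tendsto (fun k => v k x) atTop (𝓝 (w x))) (t : ℝ) :
    Tendsto (fun k => travelled (v k) t) atTop (𝓝 (travelled w t)) := by
  refine intervalIntegral.tendsto_integral_filter_of_dominated_convergence (fun _ => C)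
    (Eventually.of_forall fun n => (hvm n).aestronglyMeasurable) ?_ intervalIntegrable_const ?_
  · refine Eventually.of_forall fun n => Eventually.of_forall fun x _ => ?_
    rw [Real.norm_of_nonneg (hm.le.trans (hvb n x).1)]
    exact (hvb n x).2
  · filter_upwards [hS.ae_notMem volume] with x hx _
    exact hlim x hx

/-- Entering times converge, since travelled distances are uniformly expanding. -/
theorem tendsto_letTime (hvm : ∀ n, Measurable (v n)) (hvb : ∀ n x, v n x ∈ Set.Icc m C)
    (hwm : Measurable w) (hwb : ∀ x, w x ∈ Set.Icc m C)
    (hm : 0 < m) (hlim : ∀ t, Tendsto (fun k => travelled (v k) t) atTop (𝓝 (travelled w t)))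
    {L t : ℝ} (hL : 0 < L) (ht : 0 ≤ t) (hLt : L < travelled w t) :
    Tendsto (fun k => letTime L (v k) t) atTop (𝓝 (letTime L w t)) := by
  obtain ⟨-, h2, -⟩ := letTime_spec hwm hwb hm hL (Set.right_mem_Icc.2 ht) hLt.le
    (Set.eqOn_refl w _)
  set τ := letTime L w t
  rw [tendsto_iff_dist_tendsto_zero]
  have hz : Tendsto (fun k => |travelled (v k) t - L - travelled (v k) τ| / m) atTop (𝓝 0) := by
    have := ((((hlim t).sub_const L).sub (hlim τ)).abs).div_const m
    simpa [h2] using this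
  refine squeeze_zero' (Eventually.of_forall fun _ => dist_nonneg) ?_ hz
  filter_upwards [(hlim t).eventually (lt_mem_nhds hLt)] with k hk
  obtain ⟨-, hk2, -⟩ := letTime_spec (hvm k) (hvb k) hm hL (Set.right_mem_Icc.2 ht) hk.le
    (Set.eqOn_refl (v k) _)
  rw [le_div_iff₀ hm, ← hk2, Real.dist_eq, mul_comm]
  exact mul_abs_sub_le_abs_travelled_sub (hvm k) (hvb k) hm _ _

/-- Almost everywhere convergence of the outflow. The exceptional times are those with
`travelled w t = L` and those whose footpoint `L - travelled w t` or `letTime L w t` is a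
discontinuity of `ρ` or `In` or lies in `S`; each such set is countable because `travelled w` is
injective. -/
theorem ae_tendsto_outflow (hvm : ∀ n, Measurable (v n)) (hvb : ∀ n x, v n x ∈ Set.Icc m C)
    (hwm : Measurable w) (hwb : ∀ x, w x ∈ Set.Icc m C) (hm : 0 < m)
    {S : Set ℝ} (hS : S.Countable)
    (hlim : ∀ x ∉ S, ∀ s : ℕ → ℝ, Tendsto s atTop (𝓝 x) →
      Tendsto (fun k => v k (s k)) atTop (𝓝 (w x)))
    {L : ℝ} (hL : 0 < L) {ρ In : ℝ → ℝ} (hρ : {x | ¬ ContinuousAt ρ x}.Countable)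
    (hIn : {x | ¬ ContinuousAt In x}.Countable) :
    ∀ᵐ t, 0 ≤ t →
      Tendsto (fun k => outflow L ρ In (v k) t) atTop (𝓝 (outflow L ρ In w t)) := by
  have hD : ∀ t, Tendsto (fun k => travelled (v k) t) atTop (𝓝 (travelled w t)) :=
    tendsto_travelled hvm hvb hm hS (fun x hx => hlim x hx _ tendsto_const_nhds)
  have hinj := (travelled_strictMono hwm hwb hm).injective
  have c1 : {t | travelled w t = L}.Countable :=
    (Set.countable_singleton L).preimage_of_injOn hinj.injOn
  have c2 : ((fun t => L - travelled w t) ⁻¹' {x | ¬ ContinuousAt ρ x}).Countable :=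
    hρ.preimage_of_injOn (fun a _ b _ h => hinj (by simpa using h))
  have c3 : ((fun t => travelled w t - L) ⁻¹'
      (travelled w '' (S ∪ {x | ¬ ContinuousAt In x}))).Countable :=
    ((hS.union hIn).image _).preimage_of_injOn (fun a _ b _ h => hinj (by simpa using h))
  filter_upwards [hS.ae_notMem volume, c1.ae_notMem volume, c2.ae_notMem volume,
    c3.ae_notMem volume] with t h0 h1 h2 h3 ht
  have hvt : Tendsto (fun k => v k t) atTop (𝓝 (w t)) := hlim t h0 _ tendsto_const_nhds
  rcases lt_or_gt_of_ne (show travelled w t ≠ L from h1) with hlt | hgt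
  · have hw : outflow L ρ In w t = ρ (L - travelled w t) * w t := if_pos hlt
    rw [hw]
    have hc : ContinuousAt ρ (L - travelled w t) := by simpa using h2
    refine Tendsto.congr' ?_
      ((hc.tendsto.comp (tendsto_const_nhds.sub (hD t))).mul hvt)
    filter_upwards [(hD t).eventually (gt_mem_nhds hlt)] with k hk
    exact (if_pos hk).symm
  · obtain ⟨-, hτ2, -⟩ := letTime_spec hwm hwb hm hL (Set.right_mem_Icc.2 ht) hgt.le
      (Set.eqOn_refl w _)
    have hτ := tendsto_letTime hvm hvb hwm hwb hm hD hL ht hgt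
    have hw : outflow L ρ In w t = In (letTime L w t) * w t / w (letTime L w t) :=
      if_neg (not_lt.2 hgt.le)
    rw [hw]
    have hn : letTime L w t ∉ S ∪ {x | ¬ ContinuousAt In x} := fun hmem =>
      h3 ⟨letTime L w t, hmem, hτ2⟩
    simp only [Set.mem_union, Set.mem_ofPred_eq, not_or, not_not] at hn
    refine Tendsto.congr' ?_
      (((hn.2.tendsto.comp hτ).mul hvt).div (hlim _ hn.1 _ hτ) (hm.trans_le (hwb _).1).ne')
    filter_upwards [(hD t).eventually (lt_mem_nhds hgt)] with k hk
    exact (if_neg (not_lt.2 (le_of_lt hk))).symm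

/-- Sequential continuity of the cost under the mode of convergence given by
`helly_selection`. -/
theorem tendsto_trackCost (hvm : ∀ n, Measurable (v n)) (hvb : ∀ n x, v n x ∈ Set.Icc m C)
    (hwm : Measurable w) (hwb : ∀ x, w x ∈ Set.Icc m C) (hm : 0 < m)
    {S : Set ℝ} (hS : S.Countable)
    (hlim : ∀ x ∉ S, ∀ s : ℕ → ℝ, Tendsto s atTop (𝓝 x) →
      Tendsto (fun k => v k (s k)) atTop (𝓝 (w x)))
    {L T R F : ℝ} (hL : 0 < L) (hT : 0 < T) {ρ In f : ℝ → ℝ}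
    (hρ : BoundedVariationOn ρ Set.univ) (hIn : BoundedVariationOn In Set.univ)
    (hf : BoundedVariationOn f Set.univ)
    (hR : ∀ x, |ρ x| ≤ R) (hF : ∀ x, |In x| ≤ F) (hF' : ∀ x, |f x| ≤ F) :
    Tendsto (fun k => trackCost L T ρ In f (v k)) atTop (𝓝 (trackCost L T ρ In f w)) := by
  refine intervalIntegral.tendsto_integral_filter_of_dominated_convergence
    (fun _ => (R * C + F * C / m + F) ^ 2) ?_ ?_ intervalIntegrable_const ?_
  · refine Eventually.of_forall fun n => Measurable.aestronglyMeasurable ?_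
    exact ((outflow_measurable (hvm n) (hvb n) hm hL (BVu.measurable hρ)
      (BVu.measurable hIn)).sub (BVu.measurable hf)).pow_const 2
  · refine Eventually.of_forall fun n => Eventually.of_forall fun t _ => ?_
    rw [norm_pow, Real.norm_eq_abs]
    refine pow_le_pow_left₀ (abs_nonneg _) ?_ 2
    exact (abs_sub _ _).trans (add_le_add (abs_outflow_le (hvb n) hm hR hF t) (hF' t))
  · filter_upwards [ae_tendsto_outflow hvm hvb hwm hwb hm hS hlim hL (BVu.countable_disc hρ)
      (BVu.countable_disc hIn)] with t ht htT
    rw [Set.uIoc_of_le hT.le] at htT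
    exact ((ht htT.1.le).sub_const _).pow 2

end Convergence

/-! ### Extension to the whole line and existence of a minimiser -/

/-- Constant extension of a function beyond the endpoints of `[0, T]`. -/
noncomputable def clampExt (T : ℝ) (hT : 0 < T) (f : ℝ → ℝ) (x : ℝ) : ℝ :=
  f (Set.projIcc 0 T hT.le x)

theorem clampExt_mem {T : ℝ} (hT : 0 < T) {f : ℝ → ℝ} {s : Set ℝ}
    (h : ∀ x ∈ Set.Icc 0 T, f x ∈ s) (x : ℝ) : clampExt T hT f x ∈ s :=
  h _ (Set.projIcc 0 T hT.le x).2

theorem eqOn_clampExt {T : ℝ} (hT : 0 < T) (f : ℝ → ℝ) :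
    Set.EqOn f (clampExt T hT f) (Set.Icc 0 T) := fun x hx => by
  simp [clampExt, Set.projIcc_of_mem hT.le hx]

theorem eVariationOn_clampExt_le {T : ℝ} (hT : 0 < T) (f : ℝ → ℝ) :
    eVariationOn (clampExt T hT f) Set.univ ≤ eVariationOn f (Set.Icc 0 T) :=
  eVariationOn.comp_le_of_monotoneOn f (fun x => (Set.projIcc 0 T hT.le x : ℝ))
    (fun _ _ _ _ h => Set.monotone_projIcc hT.le h) (fun x _ => (Set.projIcc 0 T hT.le x).2)

/-- The cost functional `J` attains its minimum on
`Ω = {v ∈ BV([0,T],[v_min,C]) : TV(v) ≤ K}`. -/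
theorem stmt_9 (L T vmin C K fmin fmax ρmin ρcr : ℝ)
    (hL : 0 < L) (hT : 0 < T) (hvmin : 0 < vmin) (hC : vmin ≤ C) (hK : 0 < K)
    (hfmin : 0 < fmin) (hff : fmin ≤ fmax) (hρmin : 0 < ρmin) (hρ : ρmin ≤ ρcr)
    (In fstar ρ₀ : ℝ → ℝ)
    (hIn : ∀ t ∈ Set.Icc (0 : ℝ) T, In t ∈ Set.Icc fmin fmax)
    (hInBV : BoundedVariationOn In (Set.Icc 0 T))
    (hfs : ∀ t ∈ Set.Icc (0 : ℝ) T, fstar t ∈ Set.Icc fmin fmax)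
    (hfsBV : BoundedVariationOn fstar (Set.Icc 0 T))
    (hρ₀ : ∀ x ∈ Set.Icc (0 : ℝ) L, ρ₀ x ∈ Set.Icc ρmin ρcr)
    (hρ₀BV : BoundedVariationOn ρ₀ (Set.Icc 0 L)) :
    ∃ vstar : ℝ → ℝ,
      ((∀ t ∈ Set.Icc (0 : ℝ) T, vstar t ∈ Set.Icc vmin C) ∧
        eVariationOn vstar (Set.Icc 0 T) ≤ ENNReal.ofReal K) ∧
      ∀ v : ℝ → ℝ,
        ((∀ t ∈ Set.Icc (0 : ℝ) T, v t ∈ Set.Icc vmin C) ∧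
          eVariationOn v (Set.Icc 0 T) ≤ ENNReal.ofReal K) →
        trackCost L T ρ₀ In fstar vstar ≤ trackCost L T ρ₀ In fstar v := by
  set ρ' := clampExt L hL ρ₀
  set In' := clampExt T hT In
  set fe := clampExt T hT fstar
  -- Admissible policies, defined on the whole line.
  let A : Set (ℝ → ℝ) := {v | (∀ x, v x ∈ Set.Icc vmin C) ∧
    eVariationOn v Set.univ ≤ ENNReal.ofReal K}
  have hAm : ∀ v ∈ A, Measurable v := fun v hv =>
    BVu.measurable (ne_top_of_le_ne_top ENNReal.ofReal_ne_top hv.2)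
  have hcost : ∀ v ∈ A, ∀ u : ℝ → ℝ, Set.EqOn u v (Set.Icc 0 T) →
      trackCost L T ρ₀ In fstar u = trackCost L T ρ' In' fe v := fun v hv u hu =>
    trackCost_congr (hAm v hv) hv.1 hvmin hL hT hu (eqOn_clampExt hL _)
      (eqOn_clampExt hT _) (eqOn_clampExt hT _)
  have hne : (trackCost L T ρ' In' fe '' A).Nonempty := by
    refine ⟨_, fun _ => vmin, ⟨fun _ => ⟨le_rfl, hC⟩, ?_⟩, rfl⟩
    rw [eVariationOn.constant_on]
    · exact zero_le
    · exact Set.subsingleton_of_subset_singleton (a := vmin) (by rintro _ ⟨x, -, rfl⟩; rfl)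
  have hbdd : BddBelow (trackCost L T ρ' In' fe '' A) := by
    refine ⟨0, ?_⟩
    rintro _ ⟨v, -, rfl⟩
    exact intervalIntegral.integral_nonneg hT.le fun t _ => sq_nonneg _
  obtain ⟨J, -, hJ, hJA⟩ := exists_seq_tendsto_sInf hne hbdd
  choose v hvA hvJ using hJA
  obtain ⟨w, φ, hφ, hwb, hwvar, S, hS, hlim⟩ :=
    helly_selection v (fun n => (hvA n).1) (fun n => (hvA n).2)
  have hwA : w ∈ A := ⟨hwb, hwvar⟩
  have hbd : ∀ {g : ℝ → ℝ} {a b : ℝ}, 0 < a → (∀ x, g x ∈ Set.Icc a b) → ∀ x, |g x| ≤ b := by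
    intro g a b ha h x
    rw [abs_of_nonneg (ha.le.trans (h x).1)]
    exact (h x).2
  have hconv := tendsto_trackCost (fun n => hAm _ (hvA (φ n))) (fun n => (hvA (φ n)).1)
    (hAm w hwA) hwb hvmin hS hlim hL hT (ρ := ρ') (In := In') (f := fe)
    (ne_top_of_le_ne_top hρ₀BV (eVariationOn_clampExt_le hL _))
    (ne_top_of_le_ne_top hInBV (eVariationOn_clampExt_le hT _))
    (ne_top_of_le_ne_top hfsBV (eVariationOn_clampExt_le hT _))
    (hbd hρmin (clampExt_mem hL hρ₀)) (hbd hfmin (clampExt_mem hT hIn))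
    (hbd hfmin (clampExt_mem hT hfs))
  have hinf : trackCost L T ρ' In' fe w = sInf (trackCost L T ρ' In' fe '' A) := by
    refine tendsto_nhds_unique hconv ?_
    simpa only [hvJ, Function.comp_def] using hJ.comp hφ
  refine ⟨w, ⟨fun t _ => hwb t, (eVariationOn.mono w (Set.subset_univ _)).trans hwvar⟩, ?_⟩
  rintro u ⟨hub, huvar⟩
  have huA : clampExt T hT u ∈ A :=
    ⟨clampExt_mem hT hub, (eVariationOn_clampExt_le hT u).trans huvar⟩
  rw [hcost w hwA w (Set.eqOn_refl _ _), hcost _ huA u (eqOn_clampExt hT u), hinf]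
  exact csInf_le hbdd ⟨_, huA, rfl⟩
end

section
/- Let φ, ψ ∈ BV([a−ε, b+ε], ℝ) for some ε > 0 and let C > 0. Then lim_{Δt→0⁺} (1/Δt) ∫_a^b φ(x) ( ψ(x − CΔt) − ψ(x) ) dx = −C ∫_a^b φ(x⁺) dψ_x(x), where ψ_x is the distributional derivative of ψ (restricted to [a, b)) and the right-hand integral is defined by ∫ φ(x⁺) dψ_x := ∫ φ dμ_c + Σᵢ mᵢ φ(xᵢ⁺) for the decomposition ψ_x = μ_c + Σᵢ mᵢ δ_{xᵢ} into continuous and atomic parts. -/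
open MeasureTheory Filter Topology

/-!
Off a Lebesgue-null set `ψ` agrees with its right-continuous representative, so with `h = C * Δt`
the increment `ψ (x - h) - ψ x` equals `-(μp - μm) (x - h, x]` for almost every `x ∈ (a, b]`. Let `Φ`
be `φ` on `(a, b]`, extended by zero. Fubini's theorem (`fubini_window`) turns
`∫ Φ x * μ (x - h, x] dx` into `∫ (∫_[y, y + h) Φ x dx) dμ y`. After division by `h` the inner
integral converges to the right limit of `Φ` at `y`, which is `φ (y⁺)` on `[a, b)` and zero
elsewhere; it is bounded by `sup |φ|`, so dominated convergence applies
(`tendsto_window_average`).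
-/

/-- Fubini's theorem for the region `y ≤ x < y + h`, i.e. `y ∈ (x - h, x]`. -/
lemma fubini_window (μ : Measure ℝ) [IsFiniteMeasure μ] (Φ : ℝ → ℝ) (hΦ : Integrable Φ)
    (h : ℝ) (hh : 0 ≤ h) :
    Integrable (fun x => Φ x * μ.real (Set.Ioc (x - h) x)) ∧
    ∫ x, Φ x * μ.real (Set.Ioc (x - h) x) = ∫ y, (∫ x in y..(y + h), Φ x) ∂μ := by
  let S : Set (ℝ × ℝ) := {p | p.1 - h < p.2 ∧ p.2 ≤ p.1}
  have hS : MeasurableSet S :=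
    (measurableSet_lt (measurable_fst.sub_const h) measurable_snd).inter
      (measurableSet_le measurable_snd measurable_fst)
  have hint : Integrable (S.indicator fun p : ℝ × ℝ => Φ p.1 * 1) (volume.prod μ) :=
    (hΦ.mul_prod (integrable_const (1 : ℝ))).indicator hS
  have e1 : ∀ x, ∫ y, S.indicator (fun p : ℝ × ℝ => Φ p.1 * 1) (x, y) ∂μ
      = Φ x * μ.real (Set.Ioc (x - h) x) := by
    intro x
    have : (fun y => S.indicator (fun p : ℝ × ℝ => Φ p.1 * 1) (x, y))
        = (Set.Ioc (x - h) x).indicator fun _ => Φ x := by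
      ext y
      simp [Set.indicator, S]
    rw [this, integral_indicator measurableSet_Ioc]
    simp [mul_comm]
  have e2 : ∀ y, ∫ x, S.indicator (fun p : ℝ × ℝ => Φ p.1 * 1) (x, y)
      = ∫ x in y..(y + h), Φ x := by
    intro y
    have : (fun x => S.indicator (fun p : ℝ × ℝ => Φ p.1 * 1) (x, y))
        = (Set.Ico y (y + h)).indicator Φ := by
      ext x
      simp [Set.indicator, S, sub_lt_iff_lt_add, and_comm]
    rw [this, integral_indicator measurableSet_Ico, integral_Ico_eq_integral_Ioc,
      intervalIntegral.integral_of_le (by linarith)]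
  refine ⟨?_, ?_⟩
  · have := hint.integral_prod_left
    simpa only [e1] using this
  · have := integral_integral_swap
      (f := fun x y => S.indicator (fun p : ℝ × ℝ => Φ p.1 * 1) (x, y)) hint
    simpa only [e1, e2] using this

/-- Averages over shrinking right-hand windows, integrated against a finite measure, converge
to the integral of the right limit. -/
lemma tendsto_window_average (μ : Measure ℝ) [IsFiniteMeasure μ] (Φ Φr : ℝ → ℝ)
    (hΦ : Integrable Φ) (M : ℝ) (hM : ∀ x, |Φ x| ≤ M)
    (hr : ∀ y, Tendsto Φ (𝓝[>] y) (𝓝 (Φr y))) :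
    Tendsto (fun h => ∫ y, h⁻¹ * (∫ x in y..(y + h), Φ x) ∂μ) (𝓝[>] 0) (𝓝 (∫ y, Φr y ∂μ)) := by
  have hii : ∀ u v, IntervalIntegrable Φ volume u v := fun u v => hΦ.intervalIntegrable
  refine tendsto_integral_filter_of_dominated_convergence (fun _ => M) ?_ ?_
    (integrable_const M) ?_
  · refine Eventually.of_forall fun h => ?_
    have hc : Continuous fun y => ∫ x in (0 : ℝ)..y, Φ x :=
      intervalIntegral.continuous_primitive hii 0
    have : (fun y => h⁻¹ * ∫ x in y..(y + h), Φ x)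
        = fun y => h⁻¹ * ((∫ x in (0 : ℝ)..(y + h), Φ x) - ∫ x in (0 : ℝ)..y, Φ x) := by
      ext y
      rw [intervalIntegral.integral_interval_sub_left (hii _ _) (hii _ _)]
    rw [this]
    exact (continuous_const.mul
      ((hc.comp (continuous_id.add continuous_const)).sub hc)).aestronglyMeasurable
  · filter_upwards [self_mem_nhdsWithin] with h hh
    refine Eventually.of_forall fun y => ?_
    have hh' : 0 < h := hh
    have := intervalIntegral.norm_integral_le_of_norm_le_const (a := y) (b := y + h) (f := Φ)
      (C := M) (fun x _ => hM x)
    rw [norm_mul, norm_inv, Real.norm_of_nonneg hh'.le, inv_mul_le_iff₀ hh']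
    simpa [abs_of_pos hh', mul_comm] using this
  · refine Eventually.of_forall fun y => ?_
    have hd : HasDerivWithinAt (fun u => ∫ x in y..u, Φ x) (Φr y) (Set.Ici y) y :=
      intervalIntegral.integral_hasDerivWithinAt_of_tendsto_ae_right (t := Set.Ioi y)
        (hii y y) ⟨Set.univ, univ_mem, by simpa using hΦ.aestronglyMeasurable⟩
        ((hr y).mono_left inf_le_left)
    have hs := (hasDerivWithinAt_iff_tendsto_slope.1 hd)
    rw [Set.Ici_sdiff_left] at hs
    have hshift : Tendsto (fun h : ℝ => y + h) (𝓝[>] 0) (𝓝[>] y) := by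
      refine tendsto_nhdsWithin_iff.2 ⟨?_, ?_⟩
      · have : Tendsto (fun h : ℝ => y + h) (𝓝 0) (𝓝 (y + 0)) :=
          (continuous_const.add continuous_id).tendsto 0
        rw [add_zero] at this
        exact this.mono_left nhdsWithin_le_nhds
      · filter_upwards [self_mem_nhdsWithin] with h hh
        simpa using hh
    refine (hs.comp hshift).congr fun h => ?_
    simp [slope]

/-- A function of bounded variation on a closed interval agrees almost everywhere in the open
interval with its right limit. -/
lemma ae_eq_rightLimit (c d : ℝ) (ψ ψr : ℝ → ℝ) (hψ : BoundedVariationOn ψ (Set.Icc c d))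
    (hr : ∀ x ∈ Set.Ico c d, Tendsto ψ (𝓝[>] x) (𝓝 (ψr x))) :
    ∀ᵐ x, x ∈ Set.Ioo c d → ψ x = ψr x := by
  filter_upwards [hψ.locallyBoundedVariationOn.ae_differentiableWithinAt_of_mem] with x hx hxm
  have hc : ContinuousAt ψ x :=
    (hx (Set.Ioo_subset_Icc_self hxm)).continuousWithinAt.continuousAt
      (Icc_mem_nhds hxm.1 hxm.2)
  exact tendsto_nhds_unique (hc.tendsto.mono_left nhdsWithin_le_nhds)
    (hr x (Set.Ioo_subset_Ico_self hxm))

/-- Lemma `BVappend`. Let `φ, ψ ∈ BV([a−ε,b+ε],ℝ)` and `C > 0`. Let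
`ψ_x = μp − μm` be the distributional derivative of `ψ` (characterized through the
right-continuous representative `ψright` of `ψ`, i.e. the Stieltjes measure it generates).
Then `lim_{Δt→0⁺} (1/Δt) ∫_a^b φ(x)(ψ(x−CΔt) − ψ(x)) dx = −C ∫_{[a,b)} φ(x⁺) dψ_x(x)`,
where the right-hand integral of the right-limit function `φright` against the signed measure
`μp − μm` restricted to `[a,b)` coincides with the integral
`∫ φ dμ_c + Σᵢ mᵢ φ(xᵢ⁺)` of the paper's Definition. -/
theorem stmt_12 (a b ε C : ℝ) (hε : 0 < ε) (hC : 0 < C) (hab : a ≤ b)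
    (φ ψ φright ψright : ℝ → ℝ)
    (hφBV : BoundedVariationOn φ (Set.Icc (a - ε) (b + ε)))
    (hψBV : BoundedVariationOn ψ (Set.Icc (a - ε) (b + ε)))
    (hφright : ∀ x ∈ Set.Ico (a - ε) (b + ε), Tendsto φ (𝓝[>] x) (𝓝 (φright x)))
    (hψright : ∀ x ∈ Set.Ico (a - ε) (b + ε), Tendsto ψ (𝓝[>] x) (𝓝 (ψright x)))
    (μp μm : Measure ℝ) [IsFiniteMeasure μp] [IsFiniteMeasure μm]
    (hμ : ∀ x ∈ Set.Ico (a - ε) (b + ε),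
      ψright x = ψright (a - ε)
        + ((μp (Set.Ioc (a - ε) x)).toReal - (μm (Set.Ioc (a - ε) x)).toReal)) :
    Tendsto (fun Δt => (1 / Δt) * ∫ x in a..b, φ x * (ψ (x - C * Δt) - ψ x))
      (𝓝[>] 0)
      (𝓝 (-C * ((∫ x in Set.Ico a b, φright x ∂μp)
        - ∫ x in Set.Ico a b, φright x ∂μm))) := by
  set I := Set.Icc (a - ε) (b + ε) with hI
  have hsub : Set.Ioc a b ⊆ I := fun x hx => ⟨by linarith [hx.1], by linarith [hx.2]⟩
  have haI : a ∈ I := ⟨by linarith, by linarith⟩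
  obtain ⟨M, hM⟩ : ∃ M, ∀ x ∈ I, |φ x| ≤ M := by
    refine ⟨|φ a| + (eVariationOn φ I).toReal, fun x hx => ?_⟩
    have h1 := hφBV.dist_le hx haI
    rw [Real.dist_eq] at h1
    have h2 := abs_sub_abs_le_abs_sub (φ x) (φ a)
    linarith
  have hM0 : 0 ≤ M := (abs_nonneg _).trans (hM a haI)
  set Φ : ℝ → ℝ := (Set.Ioc a b).indicator φ with hΦdef
  have hΦM : ∀ x, |Φ x| ≤ M := by
    intro x
    by_cases hx : x ∈ Set.Ioc a b
    · simpa [hΦdef, hx] using hM x (hsub hx)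
    · simpa [hΦdef, hx] using hM0
  have hΦint : Integrable Φ := by
    obtain ⟨p, q, hp, hq, hpq⟩ :=
      hφBV.locallyBoundedVariationOn.exists_monotoneOn_sub_monotoneOn
    have hm : AEMeasurable φ (volume.restrict I) := by
      rw [hpq]
      exact (aemeasurable_restrict_of_monotoneOn measurableSet_Icc hp).sub
        (aemeasurable_restrict_of_monotoneOn measurableSet_Icc hq)
    rw [hΦdef, integrable_indicator_iff measurableSet_Ioc]
    refine IntegrableOn.of_bound (by simp)
      (hm.mono_measure (Measure.restrict_mono hsub le_rfl)).aestronglyMeasurable M ?_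
    exact (ae_restrict_iff' measurableSet_Ioc).2
      (Eventually.of_forall fun x hx => hM x (hsub hx))
  have hΦr : ∀ y, Tendsto Φ (𝓝[>] y) (𝓝 ((Set.Ico a b).indicator φright y)) := by
    intro y
    rcases lt_or_ge y a with hy | hy
    · rw [Set.indicator_of_notMem (fun h => absurd h.1 (not_le.2 hy))]
      refine tendsto_const_nhds.congr' ?_
      filter_upwards [mem_nhdsWithin_of_mem_nhds (Iio_mem_nhds hy)] with x hx
      exact (Set.indicator_of_notMem (fun h => absurd h.1 (not_lt.2 (le_of_lt hx))) _).symm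
    rcases lt_or_ge y b with hy' | hy'
    · have hyI : y ∈ Set.Ico a b := ⟨hy, hy'⟩
      rw [Set.indicator_of_mem hyI]
      refine (hφright y ⟨by linarith, by linarith⟩).congr' ?_
      filter_upwards [Ioo_mem_nhdsGT hy'] with x hx
      have hxI : x ∈ Set.Ioc a b := ⟨hy.trans_lt hx.1, hx.2.le⟩
      exact (Set.indicator_of_mem hxI _).symm
    · rw [Set.indicator_of_notMem (fun h => absurd h.2 (not_lt.2 hy'))]
      refine tendsto_const_nhds.congr' ?_
      filter_upwards [self_mem_nhdsWithin] with x hx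
      exact (Set.indicator_of_notMem
        (fun h => absurd (hy'.trans_lt hx) (not_lt.2 h.2)) _).symm
  have hscale : Tendsto (fun t : ℝ => C * t) (𝓝[>] 0) (𝓝[>] 0) := by
    refine tendsto_nhdsWithin_iff.2 ⟨?_, ?_⟩
    · have : Tendsto (fun t : ℝ => C * t) (𝓝 0) (𝓝 (C * 0)) :=
        (continuous_const.mul continuous_id).tendsto 0
      rw [mul_zero] at this
      exact this.mono_left nhdsWithin_le_nhds
    · filter_upwards [self_mem_nhdsWithin] with t ht
      exact mul_pos hC ht
  have hlim : ∀ (μ : Measure ℝ) [IsFiniteMeasure μ],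
      Tendsto (fun t => ∫ y, (C * t)⁻¹ * (∫ x in y..(y + C * t), Φ x) ∂μ) (𝓝[>] 0)
        (𝓝 (∫ x in Set.Ico a b, φright x ∂μ)) := by
    intro μ _
    rw [← integral_indicator measurableSet_Ico]
    exact (tendsto_window_average μ Φ _ hΦint M hΦM hΦr).comp hscale
  refine (((hlim μp).sub (hlim μm)).const_mul (-C)).congr' ?_
  have hev : ∀ᶠ t in 𝓝[>] (0 : ℝ), C * t < ε :=
    (hscale.mono_right nhdsWithin_le_nhds).eventually (Iio_mem_nhds hε)
  filter_upwards [self_mem_nhdsWithin, hev] with t ht hte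
  have ht0 : 0 < t := ht
  have hh : 0 < C * t := mul_pos hC ht0
  set h := C * t with hh_def
  obtain ⟨ip, ep⟩ := fubini_window μp Φ hΦint h hh.le
  obtain ⟨im, em⟩ := fubini_window μm Φ hΦint h hh.le
  have hae := ae_eq_rightLimit _ _ ψ ψright hψBV hψright
  have hae' : ∀ᵐ x, x - h ∈ Set.Ioo (a - ε) (b + ε) → ψ (x - h) = ψright (x - h) :=
    (measurePreserving_sub_right volume h).quasiMeasurePreserving.ae hae
  have hincr : ∀ (μ : Measure ℝ) [IsFiniteMeasure μ] (x : ℝ), a - ε ≤ x - h →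
      (μ (Set.Ioc (a - ε) x)).toReal
        = (μ (Set.Ioc (a - ε) (x - h))).toReal + μ.real (Set.Ioc (x - h) x) := by
    intro μ _ x hx
    have hu : Set.Ioc (a - ε) x = Set.Ioc (a - ε) (x - h) ∪ Set.Ioc (x - h) x :=
      (Set.Ioc_union_Ioc_eq_Ioc hx (by linarith)).symm
    change μ.real _ = μ.real _ + _
    rw [hu, measureReal_union (Set.Ioc_disjoint_Ioc_of_le le_rfl) measurableSet_Ioc]
  -- Both sides vanish off `(a, b]`; on it the two right-limit identities hold almost everywhere.
  have key : ∫ x in a..b, φ x * (ψ (x - h) - ψ x)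
      = -((∫ x, Φ x * μp.real (Set.Ioc (x - h) x)) - ∫ x, Φ x * μm.real (Set.Ioc (x - h) x)) := by
    rw [intervalIntegral.integral_of_le hab, ← integral_indicator measurableSet_Ioc,
      ← integral_sub ip im, ← integral_neg]
    refine integral_congr_ae ?_
    filter_upwards [hae, hae'] with x h1 h2
    by_cases hx : x ∈ Set.Ioc a b
    · have hxa := hx.1
      have hxb := hx.2
      simp only [hΦdef, Set.indicator_of_mem hx]
      rw [h1 ⟨by linarith, by linarith⟩, h2 ⟨by linarith, by linarith⟩,
        hμ x ⟨by linarith, by linarith⟩, hμ (x - h) ⟨by linarith, by linarith⟩,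
        hincr μp x (by linarith), hincr μm x (by linarith)]
      ring
    · simp [hΦdef, hx]
  rw [key, ep, em, integral_const_mul, integral_const_mul, hh_def]
  field_simp
end

section
/- Let ρ̄ ∈ BV([0,L], ℝ), g ∈ BV([0,T], ℝ), let v̂ > 0, Δv > 0, and let t ∈ (0,T). Then lim_{Δt→0⁺} (1/Δt) [ ∫₀^{Δt} ( ρ̄(L − s(v̂+Δv))·(v̂+Δv) − g(t+s) )² ds − ∫₀^{Δt} ( ρ̄(L − s v̂)·v̂ − g(t+s) )² ds ] = ρ̄(L⁻)² v̂ Δv + ρ̄(L⁻)² (v̂ + Δv) Δv − 2 g(t⁺) Δv ρ̄(L⁻). -/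
/-!
The one-sided mean `h⁻¹ ∫₀ʰ f` tends to `f(0⁺)` whenever that limit exists and `f` is measurable
on some interval to the right of `0` (fundamental theorem of calculus from the right). Functions of
bounded variation are differences of monotone functions, hence measurable, and precomposing with
the affine maps `s ↦ L - s c` and `s ↦ t + s` preserves bounded variation. Applied to both squared
integrands, with right limits `(ρ(L⁻) c - g(t⁺))²` for `c = v̂ + Δv` and `c = v̂`, this gives the
limit as a difference of two squares.
-/

open MeasureTheory Filter Topology


/-- The right limit of a function is the limit of its means over `[0, h]` as `h → 0⁺`. -/
lemma tendsto_mean_right {f : ℝ → ℝ} {c : ℝ} (hf : Tendsto f (𝓝[>] 0) (𝓝 c))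
    (hm : StronglyMeasurableAtFilter f (𝓝[>] 0) volume) :
    Tendsto (fun h : ℝ => (1 / h) * ∫ s in (0 : ℝ)..h, f s) (𝓝[>] 0) (𝓝 c) := by
  -- Only the limit at `0` matters, so the theorem is applied on the trivial interval `[0, 0]`.
  have h := intervalIntegral.integral_hasDerivWithinAt_of_tendsto_ae_right
    (f := f) (a := 0) (b := 0) (c := c) (s := Set.Ici 0) (t := Set.Ioi 0)
    (by simp) hm (hf.mono_left inf_le_left)
  rw [hasDerivWithinAt_iff_tendsto_slope, Set.Ici_sdiff_left] at h
  refine h.congr fun x => ?_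
  simp [slope_def_field, div_eq_inv_mul]

lemma BoundedVariationOn.aestronglyMeasurable_restrict {f : ℝ → ℝ} {s : Set ℝ}
    (hf : BoundedVariationOn f s) (hs : MeasurableSet s) :
    AEStronglyMeasurable f (volume.restrict s) := by
  obtain ⟨p, q, hp, hq, h⟩ :=
    hf.locallyBoundedVariationOn.exists_monotoneOn_sub_monotoneOn
  rw [h]
  exact ((aemeasurable_restrict_of_monotoneOn hs hp).sub
    (aemeasurable_restrict_of_monotoneOn hs hq)).aestronglyMeasurable

/-- Mean of the squared difference between the outflow at constant speed `c` and the target `g`. -/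
lemma tendsto_mean_sq_outflow {L T c t ρLm gtp : ℝ} (hL : 0 < L) (hc : 0 < c)
    (ht : t ∈ Set.Ioo (0 : ℝ) T) {ρ g : ℝ → ℝ}
    (hρBV : BoundedVariationOn ρ (Set.Icc 0 L))
    (hgBV : BoundedVariationOn g (Set.Icc 0 T))
    (hρ : Tendsto ρ (𝓝[<] L) (𝓝 ρLm)) (hg : Tendsto g (𝓝[>] t) (𝓝 gtp)) :
    Tendsto (fun h : ℝ => (1 / h) * ∫ s in (0 : ℝ)..h, (ρ (L - s * c) * c - g (t + s)) ^ 2)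
      (𝓝[>] 0) (𝓝 ((ρLm * c - gtp) ^ 2)) := by
  obtain ⟨ht0, htT⟩ := ht
  have hφ : Tendsto (fun s : ℝ => L - s * c) (𝓝[>] 0) (𝓝[<] L) := by
    refine tendsto_nhdsWithin_iff.2 ⟨?_, ?_⟩
    · have : Continuous fun s : ℝ => L - s * c := by fun_prop
      simpa using (this.tendsto 0).mono_left nhdsWithin_le_nhds
    · filter_upwards [self_mem_nhdsWithin] with s hs
      have : 0 < s * c := mul_pos hs hc
      simpa using this
  have hψ : Tendsto (fun s : ℝ => t + s) (𝓝[>] 0) (𝓝[>] t) := by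
    refine tendsto_nhdsWithin_iff.2 ⟨?_, ?_⟩
    · have : Continuous fun s : ℝ => t + s := by fun_prop
      simpa using (this.tendsto 0).mono_left nhdsWithin_le_nhds
    · filter_upwards [self_mem_nhdsWithin] with s hs
      simpa using hs
  refine tendsto_mean_right ((((hρ.comp hφ).mul_const c).sub (hg.comp hψ)).pow 2) ?_
  -- On `[0, min (L / c) (T - t)]` both arguments stay where `ρ` and `g` have bounded variation.
  have hb : 0 < min (L / c) (T - t) := lt_min (div_pos hL hc) (sub_pos.2 htT)
  refine ⟨Set.Icc 0 (min (L / c) (T - t)), Icc_mem_nhdsGT hb, ?_⟩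
  have h1 : BoundedVariationOn (ρ ∘ fun s : ℝ => L - s * c)
      (Set.Icc 0 (min (L / c) (T - t))) := by
    refine ne_top_of_le_ne_top hρBV (eVariationOn.comp_le_of_antitoneOn ρ _ ?_ ?_)
    · intro x _ y _ hxy
      have := mul_le_mul_of_nonneg_right hxy hc.le
      exact sub_le_sub_left this L
    · intro x hx
      have h2 : x * c ≤ L := (le_div_iff₀ hc).1 (hx.2.trans (min_le_left _ _))
      have h3 : 0 ≤ x * c := mul_nonneg hx.1 hc.le
      exact ⟨by linarith, by linarith⟩
  have h2 : BoundedVariationOn (g ∘ fun s : ℝ => t + s)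
      (Set.Icc 0 (min (L / c) (T - t))) := by
    refine ne_top_of_le_ne_top hgBV (eVariationOn.comp_le_of_monotoneOn g _ ?_ ?_)
    · intro x _ y _ hxy
      simpa using hxy
    · intro x hx
      have h3 : x ≤ T - t := hx.2.trans (min_le_right _ _)
      exact ⟨by linarith [hx.1], by linarith⟩
  exact (((h1.aestronglyMeasurable_restrict measurableSet_Icc).mul_const c).sub
    (h2.aestronglyMeasurable_restrict measurableSet_Icc)).pow 2


/-- Let `ρ̄ ∈ BV([0,L],ℝ)`, `g ∈ BV([0,T],ℝ)`, `v̂ > 0`, `Δv > 0` and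
`t ∈ (0,T)`. Then
`lim_{Δt→0⁺} (1/Δt) [ ∫₀^{Δt} (ρ̄(L−s(v̂+Δv))(v̂+Δv) − g(t+s))² ds
  − ∫₀^{Δt} (ρ̄(L−s v̂) v̂ − g(t+s))² ds ]
 = ρ̄(L⁻)² v̂ Δv + ρ̄(L⁻)² (v̂+Δv) Δv − 2 g(t⁺) Δv ρ̄(L⁻)`. -/
theorem stmt_13 (L T vhat Δv t ρLm gtp : ℝ) (hL : 0 < L) (hT : 0 < T)
    (hvhat : 0 < vhat) (hΔv : 0 < Δv) (ht : t ∈ Set.Ioo (0 : ℝ) T)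
    (ρbar g : ℝ → ℝ)
    (hρBV : BoundedVariationOn ρbar (Set.Icc 0 L))
    (hgBV : BoundedVariationOn g (Set.Icc 0 T))
    (hρLm : Tendsto ρbar (𝓝[<] L) (𝓝 ρLm))
    (hgtp : Tendsto g (𝓝[>] t) (𝓝 gtp)) :
    Tendsto (fun Δt : ℝ =>
        (1 / Δt) * ((∫ s in (0 : ℝ)..Δt,
            (ρbar (L - s * (vhat + Δv)) * (vhat + Δv) - g (t + s)) ^ 2)
          - ∫ s in (0 : ℝ)..Δt, (ρbar (L - s * vhat) * vhat - g (t + s)) ^ 2))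
      (𝓝[>] 0)
      (𝓝 (ρLm ^ 2 * vhat * Δv + ρLm ^ 2 * (vhat + Δv) * Δv - 2 * gtp * Δv * ρLm)) := by
  have h1 := tendsto_mean_sq_outflow hL (add_pos hvhat hΔv) ht hρBV hgBV hρLm hgtp
  have h2 := tendsto_mean_sq_outflow hL hvhat ht hρBV hgBV hρLm hgtp
  convert h1.sub h2 using 2
  · ring
  · ring
end
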